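/- arXiv:2511.00581 — 3 statements merged into one kernel-verified Lean document; each statement's English description precedes it below -/
import Mathlib

section
/- Let d ≥ 2 and a ≥ 1 be integers, m := 2^d·a, let p be an odd prime and q a power of p. Let Q be the quadratic form on (F_p)^m defined by Q(x) = x₁x₂ + x₃x₄ + ⋯ + x_{m−1}x_m, and let SO_m^+(p) := {g ∈ SL_m(F_p) : Q(g·x) = Q(x) for all x ∈ (F_p)^m}. Let G be a subgroup of GL_m(F_q) containing the image of SO_m^+(p) under the entrywise inclusion F_p ⊆ F_q, and let χ be a faithful irreducible complex character of G. Then: (a) 2^d divides χ(1); (b) if ℚ(χ) ⊆ ℝ and the Frobenius–Schur indicator of χ is +1, then χ has orthogonal discriminant 1; (c) if ℚ(χ) is not contained in ℝ, then χ has unitary discriminant 1. -/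
open Matrix

noncomputable section

namespace Paper

/-- The character of a matrix representation. -/
def charOf {G : Type} [Group G] {n : ℕ} (ρ : G →* GL (Fin n) ℂ) : G → ℂ :=
  fun g => Matrix.trace ((ρ g : Matrix (Fin n) (Fin n) ℂ))

/-- Irreducibility of a complex matrix representation. -/
def IsIrredRep {G : Type} [Group G] {n : ℕ} (ρ : G →* GL (Fin n) ℂ) : Prop :=
  0 < n ∧ ∀ W : Submodule ℂ (Fin n → ℂ),
    (∀ (g : G), ∀ v ∈ W, (ρ g : Matrix (Fin n) (Fin n) ℂ).mulVec v ∈ W) → W = ⊥ ∨ W = ⊤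

/-- `χ` is an irreducible complex character of `G`. -/
def IsIrrChar {G : Type} [Group G] (χ : G → ℂ) : Prop :=
  ∃ (n : ℕ) (ρ : G →* GL (Fin n) ℂ), IsIrredRep ρ ∧ χ = charOf ρ

/-- The character field `ℚ(χ)`, as a subfield of `ℂ`. -/
def charField {G : Type} [Group G] (χ : G → ℂ) : Subfield ℂ :=
  Subfield.closure (Set.range χ)

/-- The subfield of real numbers inside `ℂ`. -/
def realsIn : Subfield ℂ := Subfield.closure (Set.range ((↑) : ℝ → ℂ))

/-- The character field of `χ` is not contained in `ℝ`. -/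
def NotReal {G : Type} [Group G] (χ : G → ℂ) : Prop := ¬ charField χ ≤ realsIn

/-- `χ` has unitary discriminant `d`. -/
def HasUnitaryDisc {G : Type} [Group G] (χ : G → ℂ) (d : ℂ) : Prop :=
  ∀ (n : ℕ) (ρ : G →* GL (Fin n) ℂ),
    χ = charOf ρ →
    (∀ g i j, ((ρ g : Matrix (Fin n) (Fin n) ℂ)) i j ∈ charField χ) →
    ∀ H : Matrix (Fin n) (Fin n) ℂ,
      (∀ i j, H i j ∈ charField χ) →
      IsUnit H.det →
      H.conjTranspose = H →
      (∀ g, ((ρ g : Matrix (Fin n) (Fin n) ℂ)).conjTranspose * H *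
        (ρ g : Matrix (Fin n) (Fin n) ℂ) = H) →
      ∃ z ∈ charField χ, z ≠ 0 ∧
        (-1 : ℂ) ^ (n * (n - 1) / 2) * H.det = d * (z * (starRingEnd ℂ) z)

/-- `χ` has orthogonal discriminant `d`. -/
def HasOrthDisc {G : Type} [Group G] (χ : G → ℂ) (d : ℂ) : Prop :=
  ∀ (n : ℕ) (ρ : G →* GL (Fin n) ℂ),
    χ = charOf ρ →
    (∀ g i j, ((ρ g : Matrix (Fin n) (Fin n) ℂ)) i j ∈ charField χ) →
    ∀ H : Matrix (Fin n) (Fin n) ℂ,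
      (∀ i j, H i j ∈ charField χ) →
      IsUnit H.det →
      H.transpose = H →
      (∀ g, ((ρ g : Matrix (Fin n) (Fin n) ℂ)).transpose * H *
        (ρ g : Matrix (Fin n) (Fin n) ℂ) = H) →
      ∃ z ∈ charField χ, z ≠ 0 ∧
        (-1 : ℂ) ^ (n * (n - 1) / 2) * H.det = d * z ^ 2

/-- `χ` is a rational character. -/
def IsRationalChar {G : Type} [Group G] (χ : G → ℂ) : Prop :=
  ∀ g, ∃ r : ℚ, χ g = (r : ℂ)

/-- `χ` is the character of a representation over `ℚ`. -/
def RealizableOverQ {G : Type} [Group G] (χ : G → ℂ) : Prop :=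
  ∃ (n : ℕ) (ρ : G →* GL (Fin n) ℂ), χ = charOf ρ ∧
    ∀ g i j, ∃ r : ℚ, ((ρ g : Matrix (Fin n) (Fin n) ℂ)) i j = (r : ℂ)

end Paper

namespace Paper

/-- The Frobenius–Schur indicator of a character. -/
def FSind {G : Type} [Group G] (χ : G → ℂ) : ℂ :=
  (Nat.card G : ℂ)⁻¹ * ∑ᶠ g : G, χ (g * g)

/-- The quadratic form `Q(x) = x₁x₂ + x₃x₄ + ⋯ + x_{m-1}x_m` on `(F_p)^m`,
`m = 2·half`. -/
def Qform (p half : ℕ) (x : Fin (2 * half) → ZMod p) : ZMod p :=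
  ∑ i : Fin half,
    x ⟨2 * (i : ℕ), by have := i.isLt; omega⟩ *
    x ⟨2 * (i : ℕ) + 1, by have := i.isLt; omega⟩

/-!
The determinant is a quadratic form of type `+` on `2 × 2` matrices, and `SL₂ ∘ SL₂` acts on it by
left and right multiplication. A copy of `Q₈` in each factor yields two Pauli pairs `x, z` with
`x² = 1` and `xz = -zx`. Tensoring with shift and sign matrices on `(F_p)^(2^(d-2))` gives `d` such
pairs inside `SO_m^+(p)`; the `x` of all pairs commute, and so do `x` and `z` of different pairs.

A faithful irreducible character takes `-1 ∈ G` to `-χ(1)`, so the relations survive in every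
representation affording `χ`. The `d` commuting involutions `x` then have `2^d` joint eigenspaces,
which the elements `z` permute transitively, so `2^d` divides `χ(1)`. For an invariant form `H`, the
eigenspaces `V₊` and `V₋ = zV₊` of a single `x` are orthogonal and isometric, so `det H` is
`(det D)²` up to the square or norm coming from the change of basis, where the Gram matrix `D` of
`H` on `V₊` has `det D` fixed by conjugation. Finally `4 ∣ χ(1)` makes the sign
`(-1)^(n(n-1)/2)` trivial.
-/

/-- The commutation relations of the Pauli operators `X i` and `Z i` on distinct qubits, with `c` in
the role of the scalar `-1`. The elements `z i` need be neither involutions nor commute. -/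
structure IsPauliFamily {M ι : Type*} [Monoid M] (c : M) (x z : ι → M) : Prop where
  mul_self : ∀ i, x i * x i = 1
  commute : ∀ i j, Commute (x i) (x j)
  commute_of_ne : ∀ i j, i ≠ j → Commute (x i) (z j)
  mul_eq : ∀ i, x i * z i = c * (z i * x i)

namespace IsPauliFamily

section Monoid

variable {M N ι : Type*} [Monoid M] [Monoid N] {c : M} {x z : ι → M}

theorem map (h : IsPauliFamily c x z) (f : M →* N) : IsPauliFamily (f c) (f ∘ x) (f ∘ z) where
  mul_self i := by simp [← map_mul, h.mul_self i]
  commute i j := (h.commute i j).map f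
  commute_of_ne i j hij := (h.commute_of_ne i j hij).map f
  mul_eq i := by simp [← map_mul, h.mul_eq i]

theorem of_map {f : M →* N} (hf : Function.Injective f)
    (h : IsPauliFamily (f c) (f ∘ x) (f ∘ z)) : IsPauliFamily c x z where
  mul_self i := hf (by simpa using h.mul_self i)
  commute i j := (h.commute i j).of_map hf
  commute_of_ne i j hij := (h.commute_of_ne i j hij).of_map hf
  mul_eq i := hf (by simpa using h.mul_eq i)

end Monoid

section Kronecker

open scoped Kronecker

variable {R m n ι κ : Type*} [CommRing R] [Fintype m] [DecidableEq m] [Fintype n] [DecidableEq n]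

theorem kronecker {x z : ι → Matrix m m R} {y w : κ → Matrix n n R}
    (h : IsPauliFamily (-1) x z) (h' : IsPauliFamily (-1) y w) :
    IsPauliFamily (-1)
      (Sum.elim (fun i => x i ⊗ₖ (1 : Matrix n n R)) fun k => (1 : Matrix m m R) ⊗ₖ y k)
      (Sum.elim (fun i => z i ⊗ₖ (1 : Matrix n n R)) fun k => (1 : Matrix m m R) ⊗ₖ w k) where
  mul_self := by
    rintro (i | k) <;> simp [← mul_kronecker_mul, h.mul_self, h'.mul_self]
  commute := by
    rintro (i | k) (j | l) <;>
      simp [commute_iff_eq, ← mul_kronecker_mul, (h.commute _ _).eq, (h'.commute _ _).eq]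
  commute_of_ne := by
    rintro (i | k) (j | l) hne
    · simp [commute_iff_eq, ← mul_kronecker_mul, (h.commute_of_ne i j (by simpa using hne)).eq]
    · simp [commute_iff_eq, ← mul_kronecker_mul]
    · simp [commute_iff_eq, ← mul_kronecker_mul]
    · simp [commute_iff_eq, ← mul_kronecker_mul, (h'.commute_of_ne k l (by simpa using hne)).eq]
  mul_eq := by
    rintro (i | k) <;> ext <;>
      simp [← mul_kronecker_mul, h.mul_eq, h'.mul_eq, kroneckerMap_apply]

end Kronecker

end IsPauliFamily

theorem isIdempotentElem_half_smul_one_add {K A : Type*} [Field K] [NeZero (2 : K)] [Ring A]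
    [Algebra K A] {x : A} (hx : x * x = 1) : IsIdempotentElem ((2⁻¹ : K) • (1 + x)) := by
  have hsq : (1 + x) * (1 + x) = (2 : K) • (1 + x) := by
    rw [two_smul, mul_add, mul_one, add_mul, one_mul, hx, add_comm x 1]
  rw [IsIdempotentElem, smul_mul_smul_comm, hsq, smul_smul, mul_assoc,
    inv_mul_cancel₀ (NeZero.ne (2 : K)), mul_one]

section Divisibility

variable {K m : Type*} [Field K] [Fintype m]

theorem exists_natCast_trace_of_isIdempotentElem {P : Matrix m m K} (hP : IsIdempotentElem P) :
    ∃ r : ℕ, P.trace = r := by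
  classical
  have hP' : IsIdempotentElem (toLin' P) := hP.map (toLinAlgEquiv' : Matrix m m K ≃ₐ[K] _)
  exact ⟨_, (trace_toLin'_eq P).symm.trans (LinearMap.IsIdempotentElem.isProj_range _ hP').trace⟩

variable [CharZero K] [DecidableEq m]

theorem trace_mul_eq_zero_of_anticommute {P X Z : Matrix m m K} (hPZ : Commute P Z)
    (hXZ : X * Z = -(Z * X)) (hZ : IsUnit Z) : (P * X).trace = 0 := by
  have hconj : Z * (P * X) * Z⁻¹ = -(P * X) := by
    rw [← mul_assoc, ← hPZ.eq, mul_assoc P, ← neg_eq_iff_eq_neg.mpr hXZ, mul_neg, neg_mul,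
      ← mul_assoc, mul_nonsing_inv_cancel_right _ _ ((isUnit_iff_isUnit_det Z).mp hZ)]
  exact self_eq_neg.mp ((trace_conj hZ _).symm.trans (by rw [hconj, trace_neg]))

variable {ι : Type*} {x z : ι → Matrix m m K}

-- `P` is the projection onto the common `1`-eigenspace of the `x i` with `i ∈ S`.
theorem IsPauliFamily.exists_isIdempotentElem_trace (h : IsPauliFamily (-1) x z)
    (hz : ∀ i, IsUnit (z i)) (S : Finset ι) :
    ∃ P : Matrix m m K, IsIdempotentElem P ∧ (∀ i, Commute P (x i)) ∧
      (∀ i ∉ S, Commute P (z i)) ∧ 2 ^ S.card * P.trace = Fintype.card m := by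
  classical
  induction S using Finset.induction_on with
  | empty => exact ⟨1, .one, fun _ => .one_left _, fun _ _ => .one_left _, by simp⟩
  | insert a S ha ih =>
    obtain ⟨P, hP, hPx, hPz, htr⟩ := ih
    have hE : IsIdempotentElem ((2⁻¹ : K) • (1 + x a)) :=
      isIdempotentElem_half_smul_one_add (h.mul_self a)
    have hcomm {B : Matrix m m K} (hB : Commute (x a) B) : Commute ((2⁻¹ : K) • (1 + x a)) B :=
      ((Commute.one_left B).add_left hB).smul_left _
    have htrPx : (P * x a).trace = 0 :=
      trace_mul_eq_zero_of_anticommute (hPz a ha) (by rw [h.mul_eq, neg_one_mul]) (hz a)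
    refine ⟨P * ((2⁻¹ : K) • (1 + x a)), hP.mul_of_commute (hcomm (hPx a).symm).symm hE,
      fun i => (hPx i).mul_left (hcomm (h.commute a i)), fun i hi => ?_, ?_⟩
    · rw [Finset.mem_insert, not_or] at hi
      exact (hPz i hi.2).mul_left (hcomm (h.commute_of_ne a i (Ne.symm hi.1)))
    · rw [Finset.card_insert_of_notMem ha, mul_smul_comm, mul_add, mul_one, trace_smul, trace_add,
        htrPx, add_zero, smul_eq_mul, ← htr, pow_succ, mul_assoc, mul_inv_cancel_left₀ two_ne_zero]

theorem IsPauliFamily.two_pow_card_dvd [Fintype ι] (h : IsPauliFamily (-1) x z)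
    (hz : ∀ i, IsUnit (z i)) : 2 ^ Fintype.card ι ∣ Fintype.card m := by
  obtain ⟨P, hP, -, -, htr⟩ := h.exists_isIdempotentElem_trace hz Finset.univ
  obtain ⟨r, hr⟩ := exists_natCast_trace_of_isIdempotentElem hP
  exact ⟨r, by rw [hr] at htr; exact_mod_cast htr.symm⟩

end Divisibility

section Eigenbasis

open Module

variable {F V : Type*} [Field F] [AddCommGroup V] [Module F V]

theorem isCompl_eigenspace_one_neg_one [NeZero (2 : F)] {x : End F V} (hx : x * x = 1) :
    IsCompl (x.eigenspace 1) (x.eigenspace (-1)) := by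
  have hE := isIdempotentElem_half_smul_one_add (K := F) hx
  convert LinearMap.IsIdempotentElem.isCompl hE using 1 <;> ext v
  · rw [LinearMap.IsIdempotentElem.mem_range_iff hE, End.mem_eigenspace_iff, one_smul,
      LinearMap.smul_apply, inv_smul_eq_iff₀ (NeZero.ne (2 : F)), two_smul]
    exact (add_right_inj v).symm
  · rw [LinearMap.mem_ker, LinearMap.smul_apply,
      smul_eq_zero_iff_right (inv_ne_zero (NeZero.ne (2 : F))), End.mem_eigenspace_iff, neg_smul,
      one_smul, add_comm]
    exact eq_neg_iff_add_eq_zero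

theorem eigenspace_one_eq_comap_eigenspace_neg_one {x z : End F V} (hxz : x * z = -(z * x))
    (hz : Function.Injective z) : x.eigenspace 1 = (x.eigenspace (-1)).comap z := by
  ext v
  have hxzv : x (z v) = -z (x v) := congr($hxz v)
  rw [Submodule.mem_comap, End.mem_eigenspace_iff, End.mem_eigenspace_iff, hxzv, neg_one_smul,
    neg_inj, hz.eq_iff, one_smul]

theorem exists_basis_of_anticommute [NeZero (2 : F)] [FiniteDimensional F V] {x : End F V}
    (z : V ≃ₗ[F] V) (hx : x * x = 1) (hxz : x * z = -(z * x)) :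
    ∃ (r : ℕ) (b : Basis (Fin r ⊕ Fin r) F V),
      ∀ i, b (.inl i) ∈ x.eigenspace 1 ∧ b (.inr i) = z (b (.inl i)) := by
  have hcomap := eigenspace_one_eq_comap_eigenspace_neg_one hxz z.injective
  have hcompl := isCompl_eigenspace_one_neg_one hx
  rw [hcomap] at hcompl ⊢
  let b₀ := finBasis F ((x.eigenspace (-1)).comap z.toLinearMap)
  refine ⟨_, (b₀.prod (b₀.map (z.ofSubmodule' _))).map
    (Submodule.prodEquivOfIsCompl _ _ hcompl), fun i => ⟨?_, ?_⟩⟩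
  · simp
  · simp

theorem exists_fromCols_submatrix_isUnit_det {m : Type*} [NeZero (2 : F)] [Fintype m]
    [DecidableEq m] {X Z : Matrix m m F} (hX : X * X = 1) (hXZ : X * Z = -(Z * X))
    (hZ : IsUnit Z) :
    ∃ (r : ℕ) (e : m ≃ Fin r ⊕ Fin r) (B : Matrix m (Fin r) F),
      X * B = B ∧ IsUnit ((fromCols B (Z * B)).submatrix id e).det := by
  obtain ⟨r, b, hb⟩ := exists_basis_of_anticommute (x := toLin' X)
    (toLinearEquiv' Z hZ.invertible)
    (by rw [Module.End.mul_eq_comp, ← toLin'_mul, hX, toLin'_one, Module.End.one_eq_id])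
    (by rw [toLinearEquiv'_apply, Module.End.mul_eq_comp, ← toLin'_mul, hXZ, map_neg, toLin'_mul,
      Module.End.mul_eq_comp])
  have hbX (i : Fin r) : X *ᵥ b (.inl i) = b (.inl i) := by
    simpa using Module.End.mem_eigenspace_iff.mp (hb i).1
  have hbZ (i : Fin r) : b (.inr i) = Z *ᵥ b (.inl i) := (hb i).2
  let e := (b.indexEquiv (Pi.basisFun F m)).symm
  refine ⟨r, e, of fun k i => b (.inl i) k, ?_, ?_⟩
  · ext k i
    exact congrFun (hbX i) k
  · have hT : (fromCols (of fun k i => b (.inl i) k) (Z * of fun k i => b (.inl i) k)).submatrix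
        id e = (Pi.basisFun F m).toMatrix (b.reindex e.symm) := by
      ext k j
      rw [submatrix_apply, Basis.toMatrix_apply, Basis.reindex_apply, Equiv.symm_symm]
      rcases e j with i | i
      · simp
      · simp [hbZ, mul_apply, mulVec, dotProduct]
    rw [hT, ← Basis.det_apply]
    exact (Pi.basisFun F m).isUnit_det _

end Eigenbasis

section HermitianDeterminant

variable {F m n : Type*} [Field F] [NeZero (2 : F)] [StarRing F] [Fintype m]

theorem conjTranspose_mul_mul_eq_zero_of_eigen {o : Type*} {X H : Matrix m m F}
    {B : Matrix m n F} {C : Matrix m o F} (hX : Xᴴ * H * X = H) (hB : X * B = B)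
    (hC : X * C = -C) : Bᴴ * H * C = 0 := by
  have hneg : Bᴴ * H * C = -(Bᴴ * H * C) :=
    calc Bᴴ * H * C = Bᴴ * (Xᴴ * H * X) * C := by rw [hX]
      _ = (X * B)ᴴ * H * (X * C) := by simp only [conjTranspose_mul, Matrix.mul_assoc]
      _ = -(Bᴴ * H * C) := by rw [hB, hC, Matrix.mul_neg]
  rw [eq_neg_iff_add_eq_zero, ← two_smul F] at hneg
  exact (smul_eq_zero_iff_right (NeZero.ne (2 : F))).mp hneg

theorem conjTranspose_fromCols_mul_mul_fromCols {X Z H : Matrix m m F} {B : Matrix m n F}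
    (hH : H.IsHermitian) (hX : Xᴴ * H * X = H) (hZ : Zᴴ * H * Z = H) (hXZ : X * Z = -(Z * X))
    (hB : X * B = B) :
    (fromCols B (Z * B))ᴴ * H * fromCols B (Z * B) = fromBlocks (Bᴴ * H * B) 0 0 (Bᴴ * H * B) := by
  have hZB : X * (Z * B) = -(Z * B) := by
    rw [← Matrix.mul_assoc, hXZ, Matrix.neg_mul, Matrix.mul_assoc, hB]
  have hoff : Bᴴ * H * (Z * B) = 0 := conjTranspose_mul_mul_eq_zero_of_eigen hX hB hZB
  have hoff' : (Z * B)ᴴ * H * B = 0 := by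
    rw [← conjTranspose_eq_zero, conjTranspose_mul, conjTranspose_mul,
      conjTranspose_conjTranspose, hH.eq, ← Matrix.mul_assoc, hoff]
  have hdiag : (Z * B)ᴴ * H * (Z * B) = Bᴴ * H * B :=
    calc (Z * B)ᴴ * H * (Z * B) = Bᴴ * (Zᴴ * H * Z) * B := by
          simp only [conjTranspose_mul, Matrix.mul_assoc]
      _ = Bᴴ * H * B := by rw [hZ]
  rw [conjTranspose_fromCols_eq_fromRows_conjTranspose, fromRows_mul, fromRows_mul_fromCols, hoff,
    hoff', hdiag]

theorem exists_det_eq_mul_star [DecidableEq m] {X Z H : Matrix m m F} (hH : H.IsHermitian)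
    (hX : Xᴴ * H * X = H) (hZ : Zᴴ * H * Z = H) (hZu : IsUnit Z) (hXX : X * X = 1)
    (hXZ : X * Z = -(Z * X)) : ∃ w : F, H.det = w * star w := by
  obtain ⟨r, e, B, hB, hT⟩ := exists_fromCols_submatrix_isUnit_det hXX hXZ hZu
  set T := fromCols B (Z * B)
  set D := Bᴴ * H * B
  have hstar : star D.det = D.det := by
    rw [← det_conjTranspose, (isHermitian_conjTranspose_mul_mul B hH).eq]
  have hdet : star (T.submatrix id e).det * H.det * (T.submatrix id e).det = D.det * D.det := by
    rw [← det_conjTranspose, ← det_mul, ← det_mul, ← det_fromBlocks_zero₂₁ D 0 D,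
      ← conjTranspose_fromCols_mul_mul_fromCols hH hX hZ hXZ hB, ← det_submatrix_equiv_self e]
    rfl
  have hT₀ := hT.ne_zero
  have hT₁ := star_ne_zero.mpr hT₀
  refine ⟨D.det / (T.submatrix id e).det, ?_⟩
  rw [star_div₀, hstar, div_mul_div_comm, ← hdet]
  field_simp

end HermitianDeterminant

section Subfield

/-- The star ring structure on a commutative ring given by an involutive endomorphism. It turns
symmetric bilinear forms (`σ = id`) and Hermitian forms into instances of the same notion. -/
abbrev starRingOfInvolutive {R : Type*} [CommRing R] (σ : R →+* R)
    (hσ : Function.Involutive σ) : StarRing R where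
  star := σ
  star_involutive := hσ
  star_mul x y := by rw [map_mul, mul_comm]
  star_add := map_add σ

variable {K m : Type*} [Field K] [NeZero (2 : K)] [Fintype m] [DecidableEq m]

theorem exists_mem_det_eq_mul_map {L : Subfield K} {τ : K →+* K} (hτ : Function.Involutive τ)
    (hτL : ∀ y ∈ L, τ y ∈ L) {X Z H : Matrix m m K} (hXL : ∀ i j, X i j ∈ L)
    (hZL : ∀ i j, Z i j ∈ L) (hHL : ∀ i j, H i j ∈ L) (hH : Hᵀ.map τ = H)
    (hX : Xᵀ.map τ * H * X = H) (hZ : Zᵀ.map τ * H * Z = H) (hZu : IsUnit Z) (hXX : X * X = 1)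
    (hXZ : X * Z = -(Z * X)) : ∃ w ∈ L, H.det = w * τ w := by
  let _ : StarRing L := starRingOfInvolutive (τ.restrict L L hτL) fun y => Subtype.ext (hτ y)
  have _ : NeZero (2 : L) := ⟨fun h => NeZero.ne (2 : K) (congrArg L.subtype h)⟩
  let φ : Matrix m m L →+* Matrix m m K := L.subtype.mapMatrix
  have hφ : Function.Injective φ := Matrix.map_injective Subtype.val_injective
  have hstar (M : Matrix m m L) : φ Mᴴ = (φ M)ᵀ.map τ := rfl
  obtain ⟨X, rfl⟩ : ∃ X', φ X' = X := ⟨of fun i j => ⟨X i j, hXL i j⟩, rfl⟩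
  obtain ⟨Z, rfl⟩ : ∃ Z', φ Z' = Z := ⟨of fun i j => ⟨Z i j, hZL i j⟩, rfl⟩
  obtain ⟨H, rfl⟩ : ∃ H', φ H' = H := ⟨of fun i j => ⟨H i j, hHL i j⟩, rfl⟩
  simp only [← hstar, ← map_mul, ← map_neg, ← map_one φ, hφ.eq_iff] at hH hX hZ hXX hXZ
  have hZu' : IsUnit Z := by
    rw [isUnit_iff_isUnit_det, isUnit_iff_ne_zero] at hZu ⊢
    rintro h
    exact hZu (by rw [← RingHom.map_det, h, map_zero])
  obtain ⟨w, hw⟩ := exists_det_eq_mul_star hH hX hZ hZu' hXX hXZ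
  exact ⟨w, w.2, by rw [← RingHom.map_det, hw]; rfl⟩

end Subfield

section Character

theorem eq_neg_one_of_mul_self_of_trace_eq {K m : Type*} [Field K] [CharZero K] [Fintype m]
    [DecidableEq m] {C : Matrix m m K} (hC : C * C = 1) (htr : C.trace = -Fintype.card m) :
    C = -1 := by
  have hE := isIdempotentElem_half_smul_one_add (K := K) hC
  have hE' : IsIdempotentElem (toLin' ((2⁻¹ : K) • (1 + C))) :=
    hE.map (toLinAlgEquiv' : Matrix m m K ≃ₐ[K] _)
  have hE₀ := LinearMap.IsIdempotentElem.eq_zero_of_trace_eq_zero hE' (by simp [htr])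
  rw [LinearEquiv.map_eq_zero_iff, smul_eq_zero_iff_right (inv_ne_zero two_ne_zero),
    add_comm] at hE₀
  exact eq_neg_of_add_eq_zero_left hE₀

variable {G : Type} [Group G] {n : ℕ}

theorem charOf_one (ρ : G →* GL (Fin n) ℂ) : charOf ρ 1 = n := by
  simp [charOf]

theorem coe_apply_eq_neg_one_of_charOf {ρ : G →* GL (Fin n) ℂ} {c : G} (hc : c * c = 1)
    (hχ : charOf ρ c = -charOf ρ 1) : (ρ c : Matrix (Fin n) (Fin n) ℂ) = -1 := by
  refine eq_neg_one_of_mul_self_of_trace_eq ?_ ?_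
  · rw [← Units.val_mul, ← map_mul, hc, map_one, Units.val_one]
  · rw [Fintype.card_fin, ← charOf_one ρ, ← hχ, charOf]

theorem IsIrredRep.coe_apply_eq_one_or_neg_one {ρ : G →* GL (Fin n) ℂ} (hρ : IsIrredRep ρ) {c : G}
    (hc : c * c = 1) (hcomm : ∀ g, Commute c g) :
    (ρ c : Matrix (Fin n) (Fin n) ℂ) = 1 ∨ (ρ c : Matrix (Fin n) (Fin n) ℂ) = -1 := by
  have hC : (ρ c).val * (ρ c).val = 1 := by
    rw [← Units.val_mul, ← map_mul, hc, map_one, Units.val_one]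
  have hρC (g : G) : (ρ c).val * (ρ g).val = (ρ g).val * (ρ c).val := by
    rw [← Units.val_mul, ← Units.val_mul, ← map_mul, ← map_mul, (hcomm g).eq]
  have hmem (v : Fin n → ℂ) : v ∈ LinearMap.ker (toLin' ((ρ c).val - 1)) ↔ (ρ c).val *ᵥ v = v := by
    rw [LinearMap.mem_ker, toLin'_apply, sub_mulVec, one_mulVec, sub_eq_zero]
  rcases hρ.2 (LinearMap.ker (toLin' ((ρ c).val - 1))) fun g v hv => by
      rw [hmem] at hv ⊢
      rw [mulVec_mulVec, hρC, ← mulVec_mulVec, hv] with hbot | htop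
  · right
    have hprod : ((ρ c).val - 1) * ((ρ c).val + 1) = 0 := by noncomm_ring [hC]
    have hrange := LinearMap.range_le_ker_iff.mpr
      ((toLin'_mul _ _).symm.trans (by rw [hprod, map_zero]))
    rw [hbot, le_bot_iff, LinearMap.range_eq_bot, LinearEquiv.map_eq_zero_iff] at hrange
    exact eq_neg_of_add_eq_zero_left hrange
  · left
    rwa [LinearMap.ker_eq_top, LinearEquiv.map_eq_zero_iff, sub_eq_zero] at htop

theorem IsIrrChar.apply_eq_neg_apply_one {χ : G → ℂ} (hχ : IsIrrChar χ)
    (hfaithful : ∀ g, χ g = χ 1 → g = 1) {c : G} (hc : c * c = 1) (hc₁ : c ≠ 1)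
    (hcomm : ∀ g, Commute c g) : χ c = -χ 1 := by
  obtain ⟨n, ρ, hρ, rfl⟩ := hχ
  rcases hρ.coe_apply_eq_one_or_neg_one hc hcomm with h | h
  · exact absurd (hfaithful c (by simp [charOf, h])) hc₁
  · simp [charOf, h]

theorem star_charOf {ρ : G →* GL (Fin n) ℂ} {H : Matrix (Fin n) (Fin n) ℂ} (hH : IsUnit H.det)
    {g : G} (hg : (ρ g : Matrix (Fin n) (Fin n) ℂ)ᴴ * H * ρ g = H) :
    star (charOf ρ g) = charOf ρ g⁻¹ := by
  have hconj : (ρ g).valᴴ = H * (ρ g⁻¹).val * H⁻¹ := by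
    have hinv : (ρ g).val * (ρ g⁻¹).val = 1 := by
      rw [← Units.val_mul, ← map_mul, mul_inv_cancel, map_one, Units.val_one]
    calc (ρ g).valᴴ = (ρ g).valᴴ * H * ((ρ g).val * (ρ g⁻¹).val) * H⁻¹ := by
          rw [hinv, mul_one, mul_nonsing_inv_cancel_right _ _ hH]
      _ = H * (ρ g⁻¹).val * H⁻¹ := by rw [← mul_assoc (_ * H), hg]
  rw [charOf, charOf, ← trace_conjTranspose, hconj, trace_conj ((isUnit_iff_isUnit_det H).mpr hH)]

theorem starRingEnd_mem_charField {χ : G → ℂ} (hχ : ∀ g, star (χ g) ∈ charField χ) {y : ℂ}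
    (hy : y ∈ charField χ) : starRingEnd ℂ y ∈ charField χ := by
  have hle : charField χ ≤ (charField χ).comap (starRingEnd ℂ) :=
    Subfield.closure_le.mpr (Set.range_subset_iff.mpr hχ)
  exact hle hy

theorem neg_one_pow_mul_pred_div_two {R : Type*} [Ring R] {n : ℕ} (hn : 4 ∣ n) :
    (-1 : R) ^ (n * (n - 1) / 2) = 1 := by
  obtain ⟨k, rfl⟩ := hn
  rw [show 4 * k * (4 * k - 1) / 2 = 2 * (k * (4 * k - 1)) by
    rw [mul_assoc]; omega]
  simp

end Character

section PauliCharacter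

variable {G ι : Type} [Group G] {c : G} {x z : ι → G}

theorem IsPauliFamily.map_of_charOf (h : IsPauliFamily c x z) (hc : c * c = 1) {n : ℕ}
    {ρ : G →* GL (Fin n) ℂ} (hχ : charOf ρ c = -charOf ρ 1) :
    IsPauliFamily (-1) (fun i => (ρ (x i)).val) (fun i => (ρ (z i)).val) := by
  rw [← coe_apply_eq_neg_one_of_charOf hc hχ]
  exact h.map ((Units.coeHom _).comp ρ)

variable [Fintype ι]

theorem IsPauliFamily.two_pow_card_dvd_of_charOf (h : IsPauliFamily c x z) (hc : c * c = 1) {n : ℕ}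
    {ρ : G →* GL (Fin n) ℂ} (hχ : charOf ρ c = -charOf ρ 1) : 2 ^ Fintype.card ι ∣ n := by
  simpa using (h.map_of_charOf hc hχ).two_pow_card_dvd fun i => (ρ (z i)).isUnit

theorem IsPauliFamily.exists_mem_neg_one_pow_mul_det_eq (h : IsPauliFamily c x z)
    (hι : 2 ≤ Fintype.card ι) (hc : c * c = 1) {n : ℕ} {ρ : G →* GL (Fin n) ℂ}
    (hχ : charOf ρ c = -charOf ρ 1) {L : Subfield ℂ} {τ : ℂ →+* ℂ} (hτ : Function.Involutive τ)
    (hτL : ∀ y ∈ L, τ y ∈ L) (hρL : ∀ g i j, (ρ g).val i j ∈ L) {H : Matrix (Fin n) (Fin n) ℂ}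
    (hHL : ∀ i j, H i j ∈ L) (hdet : IsUnit H.det) (hH : Hᵀ.map τ = H)
    (hinv : ∀ g, (ρ g).valᵀ.map τ * H * (ρ g).val = H) :
    ∃ w ∈ L, w ≠ 0 ∧ (-1 : ℂ) ^ (n * (n - 1) / 2) * H.det = w * τ w := by
  obtain ⟨i⟩ : Nonempty ι := Fintype.card_pos_iff.mp (by omega)
  have hρ := h.map_of_charOf hc hχ
  obtain ⟨w, hwL, hw⟩ := exists_mem_det_eq_mul_map hτ hτL (hρL (x i)) (hρL (z i)) hHL hH
    (hinv (x i)) (hinv (z i)) (ρ (z i)).isUnit (hρ.mul_self i) (by rw [hρ.mul_eq, neg_one_mul])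
  have hn : 4 ∣ n := (pow_dvd_pow 2 hι).trans (h.two_pow_card_dvd_of_charOf hc hχ)
  refine ⟨w, hwL, ?_, by rw [neg_one_pow_mul_pred_div_two hn, one_mul, hw]⟩
  rintro rfl
  exact hdet.ne_zero (by rw [hw, zero_mul])

variable {χ : G → ℂ}

theorem IsPauliFamily.hasOrthDisc_one (h : IsPauliFamily c x z) (hι : 2 ≤ Fintype.card ι)
    (hc : c * c = 1) (hχ : χ c = -χ 1) : HasOrthDisc χ 1 := by
  rintro n ρ rfl hρL H hHL hdet hH hinv
  simpa [sq] using h.exists_mem_neg_one_pow_mul_det_eq hι hc hχ (τ := RingHom.id ℂ) (fun _ => rfl)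
    (fun _ => id) hρL hHL hdet (by simpa using hH) (by simpa using hinv)

theorem IsPauliFamily.hasUnitaryDisc_one (h : IsPauliFamily c x z) (hι : 2 ≤ Fintype.card ι)
    (hc : c * c = 1) (hχ : χ c = -χ 1) : HasUnitaryDisc χ 1 := by
  rintro n ρ rfl hρL H hHL hdet hH hinv
  have hstar (g : G) : star (charOf ρ g) ∈ charField (charOf ρ) := by
    rw [star_charOf hdet (hinv g)]
    exact Subfield.subset_closure ⟨g⁻¹, rfl⟩
  simpa using h.exists_mem_neg_one_pow_mul_det_eq hι hc hχ (τ := starRingEnd ℂ) Complex.conj_conj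
    (fun _ => starRingEnd_mem_charField hstar) hρL hHL hdet hH hinv

end PauliCharacter

section Shift

variable {ι α R : Type*} [DecidableEq ι] [CommRing R]

/-- The permutation of `(ι → ℤˣ) × α` that changes the sign of the `i`-th coordinate. -/
def flipPerm (α : Type*) (i : ι) : Equiv.Perm ((ι → ℤˣ) × α) :=
  (Equiv.mulLeft (Pi.mulSingle i (-1))).prodCongr (Equiv.refl α)

theorem flipPerm_mul_self (i : ι) : flipPerm α i * flipPerm α i = 1 := by
  ext u <;> simp [flipPerm, ← mul_assoc]

theorem flipPerm_commute (i j : ι) : Commute (flipPerm α i) (flipPerm α j) := by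
  ext u <;> simp [flipPerm, mul_left_comm]

theorem flipPerm_fst_self (i : ι) (u : (ι → ℤˣ) × α) : (flipPerm α i u).1 i = -u.1 i := by
  simp [flipPerm]

theorem flipPerm_fst_of_ne {i j : ι} (hij : i ≠ j) (u : (ι → ℤˣ) × α) :
    (flipPerm α i u).1 j = u.1 j := by
  simp [flipPerm, hij.symm]

theorem permMatrix_mul_diagonal {n : Type*} [Fintype n] [DecidableEq n] (σ : Equiv.Perm n)
    (d : n → R) : σ.permMatrix R * diagonal d = diagonal (d ∘ σ) * σ.permMatrix R := by
  ext a b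
  rw [mul_diagonal, diagonal_mul]
  by_cases hab : σ a = b <;> simp [Equiv.Perm.permMatrix, PEquiv.toMatrix_apply, hab]

variable [Fintype ι] [Fintype α] [DecidableEq α]

variable (α R) in
theorem isPauliFamily_flipPerm :
    IsPauliFamily (-1) (fun i : ι => (flipPerm α i).permMatrix R)
      (fun i : ι => diagonal fun u : (ι → ℤˣ) × α => ((u.1 i : ℤ) : R)) where
  mul_self i := by rw [← permMatrix_mul, flipPerm_mul_self, permMatrix_one]
  commute i j := by
    rw [commute_iff_eq, ← permMatrix_mul, ← permMatrix_mul, (flipPerm_commute i j).eq]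
  commute_of_ne i j hij := by
    rw [commute_iff_eq, permMatrix_mul_diagonal]
    congr 2 with u
    simp [flipPerm_fst_of_ne hij]
  mul_eq i := by
    rw [permMatrix_mul_diagonal, ← mul_assoc, neg_one_mul, diagonal_neg]
    congr 2 with u
    simp [flipPerm_fst_self]

theorem transpose_permMatrix_flipPerm_mul_self (i : ι) :
    ((flipPerm α i).permMatrix R)ᵀ * (flipPerm α i).permMatrix R = 1 := by
  rw [transpose_permMatrix, ← permMatrix_mul, mul_inv_cancel, permMatrix_one]

theorem transpose_diagonal_sign_mul_self (i : ι) :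
    (diagonal fun u : (ι → ℤˣ) × α => ((u.1 i : ℤ) : R))ᵀ *
      diagonal (fun u : (ι → ℤˣ) × α => ((u.1 i : ℤ) : R)) = 1 := by
  simp [← Int.cast_mul, ← Units.val_mul, Int.units_mul_self]

end Shift

section Quaternion

open scoped Kronecker

variable {R m n : Type*} [CommRing R]

theorem neg_kronecker (A : Matrix m m R) (B : Matrix n n R) : (-A) ⊗ₖ B = -(A ⊗ₖ B) := by
  ext; simp [kroneckerMap_apply]

theorem kronecker_neg (A : Matrix m m R) (B : Matrix n n R) : A ⊗ₖ (-B) = -(A ⊗ₖ B) := by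
  ext; simp [kroneckerMap_apply]

theorem isPauliFamily_kronecker_of_anticommute [Fintype n] [DecidableEq n] {j k : Matrix n n R}
    (hj : j * j = -1) (hk : k * k = -1) (hjk : j * k = -(k * j)) :
    IsPauliFamily (-1) ![j ⊗ₖ j, k ⊗ₖ k] ![k ⊗ₖ (1 : Matrix n n R), (1 : Matrix n n R) ⊗ₖ j] where
  mul_self := by
    simp [Fin.forall_fin_two, ← mul_kronecker_mul, hj, hk, neg_kronecker, kronecker_neg]
  commute := by
    simp [Fin.forall_fin_two, commute_iff_eq, ← mul_kronecker_mul, hjk, neg_kronecker,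
      kronecker_neg]
  commute_of_ne := by
    simp [Fin.forall_fin_two, commute_iff_eq, ← mul_kronecker_mul]
  mul_eq := by
    simp [Fin.forall_fin_two, ← mul_kronecker_mul, hjk, neg_kronecker, kronecker_neg]

/-- The matrix `j` of the standard symplectic form on `R²`, which squares to `-1`. -/
def symplectic (R : Type*) [CommRing R] : Matrix (Fin 2) (Fin 2) R := !![0, 1; -1, 0]

theorem symplectic_mul_self : symplectic R * symplectic R = -1 := by
  ext i j; fin_cases i <;> fin_cases j <;> simp [symplectic]

theorem det_symplectic : (symplectic R).det = 1 := by
  simp [symplectic]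

theorem transpose_mul_symplectic_mul (A : Matrix (Fin 2) (Fin 2) R) :
    Aᵀ * symplectic R * A = A.det • symplectic R := by
  ext i j
  fin_cases i <;> fin_cases j <;>
    simp [symplectic, mul_apply, Fin.sum_univ_two, det_fin_two] <;> ring

theorem exists_anticommute_symplectic {s t : R} (hst : s ^ 2 + t ^ 2 = -1) :
    ∃ k : Matrix (Fin 2) (Fin 2) R, k.det = 1 ∧ k * k = -1 ∧
      symplectic R * k = -(k * symplectic R) := by
  refine ⟨!![s, t; t, -s], ?_, ?_, ?_⟩
  · rw [det_fin_two_of]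
    linear_combination -hst
  · ext i j
    fin_cases i <;> fin_cases j <;>
      simp [mul_apply, Fin.sum_univ_two, ← sq, hst, add_comm (t ^ 2), mul_comm t]
  · ext i j
    fin_cases i <;> fin_cases j <;> simp [symplectic, mul_apply, Fin.sum_univ_two]

end Quaternion

section SpecialIsometry

open scoped Kronecker

variable {R m n : Type*} [CommRing R] [Fintype m] [DecidableEq m] [Fintype n] [DecidableEq n]

/-- `M` has determinant `1` and preserves the bilinear form with Gram matrix `K`. -/
structure IsSpecialIsometry (K M : Matrix n n R) : Prop where
  det_eq_one : M.det = 1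
  transpose_mul_mul : Mᵀ * K * M = K

theorem IsSpecialIsometry.kronecker_symplectic {A : Matrix m m R} {B C : Matrix (Fin 2) (Fin 2) R}
    (hA : Aᵀ * A = 1) (hB : B.det = 1) (hC : C.det = 1) :
    IsSpecialIsometry ((1 : Matrix m m R) ⊗ₖ (symplectic R ⊗ₖ symplectic R)) (A ⊗ₖ (B ⊗ₖ C)) where
  det_eq_one := by
    have hdet : A.det ^ 2 = 1 := by
      rw [sq, ← det_one (n := m), ← hA, det_mul, det_transpose]
    rw [det_kronecker, det_kronecker, hB, hC, Fintype.card_prod, Fintype.card_fin, pow_mul, hdet]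
    simp
  transpose_mul_mul := by
    simp only [← kroneckerMap_transpose, ← mul_kronecker_mul, mul_one, hA,
      transpose_mul_symplectic_mul, hB, hC, one_smul]

theorem exists_isPauliFamily_isSpecialIsometry {s t : R} (hst : s ^ 2 + t ^ 2 = -1)
    (ι α : Type*) [Fintype ι] [DecidableEq ι] [Fintype α] [DecidableEq α] :
    ∃ x z : ι ⊕ Fin 2 →
        Matrix (((ι → ℤˣ) × α) × (Fin 2 × Fin 2)) (((ι → ℤˣ) × α) × (Fin 2 × Fin 2)) R,
      IsPauliFamily (-1) x z ∧
      (∀ i, IsSpecialIsometry (1 ⊗ₖ (symplectic R ⊗ₖ symplectic R)) (x i)) ∧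
      ∀ i, IsSpecialIsometry (1 ⊗ₖ (symplectic R ⊗ₖ symplectic R)) (z i) := by
  obtain ⟨k, hdet, hk, hjk⟩ := exists_anticommute_symplectic hst
  have hj : (symplectic R).det = 1 := det_symplectic
  refine ⟨_, _, (isPauliFamily_flipPerm α R (ι := ι)).kronecker
    (isPauliFamily_kronecker_of_anticommute symplectic_mul_self hk hjk), ?_, ?_⟩
  · rintro (i | i)
    · rw [Sum.elim_inl, ← one_kronecker_one (m := Fin 2) (n := Fin 2)]
      exact .kronecker_symplectic (transpose_permMatrix_flipPerm_mul_self i) det_one det_one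
    · rw [Sum.elim_inr]
      fin_cases i
      · exact .kronecker_symplectic (by simp) hj hj
      · exact .kronecker_symplectic (by simp) hdet hdet
  · rintro (i | i)
    · rw [Sum.elim_inl, ← one_kronecker_one (m := Fin 2) (n := Fin 2)]
      exact .kronecker_symplectic (transpose_diagonal_sign_mul_self i) det_one det_one
    · rw [Sum.elim_inr]
      fin_cases i
      · exact .kronecker_symplectic (by simp) hdet det_one
      · exact .kronecker_symplectic (by simp) det_one hj

end SpecialIsometry

section Coordinates

open scoped Kronecker

variable {R m n : Type*} [CommRing R] [Fintype m] [DecidableEq m] [Fintype n] [DecidableEq n]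

theorem dotProduct_one_kronecker_symplectic_mulVec (y : m × (Fin 2 × Fin 2) → R) :
    y ⬝ᵥ ((1 ⊗ₖ (symplectic R ⊗ₖ symplectic R)) *ᵥ y) =
      2 * ∑ u, (y (u, 0, 0) * y (u, 1, 1) - y (u, 0, 1) * y (u, 1, 0)) := by
  have hrow (u : m) (v : Fin 2 × Fin 2) :
      ((1 ⊗ₖ (symplectic R ⊗ₖ symplectic R)) *ᵥ y) (u, v) =
        ((symplectic R ⊗ₖ symplectic R) *ᵥ fun w => y (u, w)) v := by
    simp [mulVec, dotProduct, Fintype.sum_prod_type (α₁ := m), kroneckerMap_apply, one_apply]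
  rw [Finset.mul_sum, dotProduct, Fintype.sum_prod_type]
  refine Finset.sum_congr rfl fun u _ => ?_
  simp only [hrow]
  simp [mulVec, dotProduct, Fintype.sum_prod_type, symplectic]
  ring

end Coordinates

section Coordinates

open scoped Kronecker

theorem exists_linearEquiv_Qform_eq_sum {U : Type*} [Fintype U] {p half : ℕ}
    (hU : Fintype.card U * 2 = half) :
    ∃ f : (Fin (2 * half) → ZMod p) ≃ₗ[ZMod p] (U × (Fin 2 × Fin 2) → ZMod p), ∀ x,
      Qform p half x =
        ∑ u, (f x (u, 0, 0) * f x (u, 1, 1) - f x (u, 0, 1) * f x (u, 1, 0)) := by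
  obtain ⟨e⟩ : Nonempty (U × Fin 2 ≃ Fin half) := by
    rw [← Fintype.card_eq]
    simpa using hU
  let pair : Fin half × Fin 2 ≃ Fin (2 * half) :=
    finProdFinEquiv.trans (finCongr (Nat.mul_comm half 2))
  -- The `2 × 2` blocks group two hyperbolic planes: entries `(0, 0)` and `(1, 1)` are the
  -- coordinates of one of them, `(0, 1)` and `(1, 0)` those of the other.
  let shear : Fin 2 × Fin 2 ≃ Fin 2 × Fin 2 :=
    (Equiv.prodShear (.refl _) Equiv.addLeft).trans (.prodComm _ _)
  let coord : U × (Fin 2 × Fin 2) ≃ Fin (2 * half) :=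
    ((Equiv.prodCongr (.refl U) shear).trans (Equiv.prodAssoc U _ _).symm).trans
      ((e.prodCongr (.refl _)).trans pair)
  let sign : Fin 2 × Fin 2 → (ZMod p)ˣ := fun v => if v = (0, 1) then -1 else 1
  refine ⟨(LinearEquiv.funCongrLeft (ZMod p) (ZMod p) coord).trans
    (LinearEquiv.piCongrRight fun v => LinearEquiv.smulOfUnit (sign v.2)), fun x => ?_⟩
  have hQ : Qform p half x = ∑ i, x (pair (i, 0)) * x (pair (i, 1)) := by
    simp only [Qform]
    refine Finset.sum_congr rfl fun i _ => ?_
    congr 2 <;> ext <;> simp [pair, add_comm]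
  rw [hQ, ← e.sum_comp, Fintype.sum_prod_type]
  refine Finset.sum_congr rfl fun u _ => ?_
  simp [coord, shear, sign, LinearEquiv.funCongrLeft, LinearMap.funLeft, LinearEquiv.smulOfUnit]

end Coordinates

section Conjugation

variable {R m n : Type*} [CommRing R] [Fintype m] [DecidableEq m] [Fintype n] [DecidableEq n]

/-- The change of coordinates of square matrices along a linear equivalence `f`: the matrix `M` is
sent to the matrix of `f⁻¹ ∘ M ∘ f`. -/
def conjMatrix (f : (n → R) ≃ₗ[R] (m → R)) : Matrix m m R ≃ₐ[R] Matrix n n R :=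
  toLinAlgEquiv'.trans ((f.symm.conjAlgEquiv R).trans LinearMap.toMatrixAlgEquiv')

theorem toLinAlgEquiv'_conjMatrix (f : (n → R) ≃ₗ[R] (m → R)) (M : Matrix m m R) :
    toLinAlgEquiv' (conjMatrix f M) = f.symm.conjAlgEquiv R (toLinAlgEquiv' M) := by
  rw [conjMatrix, AlgEquiv.trans_apply, AlgEquiv.trans_apply, toLinAlgEquiv'_toMatrixAlgEquiv']

theorem apply_conjMatrix_mulVec (f : (n → R) ≃ₗ[R] (m → R)) (M : Matrix m m R) (v : n → R) :
    f (conjMatrix f M *ᵥ v) = M *ᵥ f v := by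
  rw [← toLinAlgEquiv'_apply, toLinAlgEquiv'_conjMatrix]
  simp

theorem det_conjMatrix (f : (n → R) ≃ₗ[R] (m → R)) (M : Matrix m m R) :
    (conjMatrix f M).det = M.det := by
  calc (conjMatrix f M).det = LinearMap.det (toLinAlgEquiv' (conjMatrix f M)) :=
        (LinearMap.det_toLin' _).symm
    _ = LinearMap.det (toLinAlgEquiv' M) := by
        rw [toLinAlgEquiv'_conjMatrix, LinearEquiv.conjAlgEquiv_apply]
        exact LinearMap.det_conj _ f.symm
    _ = M.det := LinearMap.det_toLin' M

end Conjugation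

section SpecialOrthogonal

open scoped Kronecker

/-- The group `SO_m^+(p)`, `m = 2 * half`, of the matrices of determinant `1` preserving the form
`Qform p half`. -/
def specialOrthogonal (p half : ℕ) :
    Subgroup (Matrix.SpecialLinearGroup (Fin (2 * half)) (ZMod p)) where
  carrier := {g | ∀ x, Qform p half (g.val *ᵥ x) = Qform p half x}
  mul_mem' {g h} hg hh x := by
    rw [Matrix.SpecialLinearGroup.coe_mul, ← mulVec_mulVec, hg, hh]
  one_mem' x := by simp
  inv_mem' {g} hg x := by
    rw [← hg (g⁻¹.val *ᵥ x), mulVec_mulVec, ← Matrix.SpecialLinearGroup.coe_mul, mul_inv_cancel,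
      Matrix.SpecialLinearGroup.coe_one, one_mulVec]

theorem IsSpecialIsometry.dotProduct_mulVec_mulVec {R n : Type*} [CommRing R] [Fintype n]
    [DecidableEq n] {K M : Matrix n n R} (hM : IsSpecialIsometry K M) (y : n → R) :
    (M *ᵥ y) ⬝ᵥ (K *ᵥ (M *ᵥ y)) = y ⬝ᵥ (K *ᵥ y) := by
  conv_rhs => rw [← hM.transpose_mul_mul, ← mulVec_mulVec, ← mulVec_mulVec,
    dotProduct_mulVec, vecMul_transpose]

variable {U : Type*} [Fintype U] [DecidableEq U] {p half : ℕ}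

theorem exists_algEquiv_specialOrthogonal (hp : Odd p)
    (hU : Fintype.card U * 2 = half) :
    ∃ Φ : Matrix (U × (Fin 2 × Fin 2)) (U × (Fin 2 × Fin 2)) (ZMod p) ≃ₐ[ZMod p]
        Matrix (Fin (2 * half)) (Fin (2 * half)) (ZMod p),
      ∀ M, IsSpecialIsometry (1 ⊗ₖ (symplectic (ZMod p) ⊗ₖ symplectic (ZMod p))) M →
        ∃ g : specialOrthogonal p half, g.val.val = Φ M := by
  obtain ⟨f, hf⟩ := exists_linearEquiv_Qform_eq_sum (p := p) hU
  have h2 : IsUnit (2 : ZMod p) := by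
    simpa using (ZMod.isUnit_iff_coprime 2 p).mpr hp.coprime_two_left
  refine ⟨conjMatrix f, fun M hM =>
    ⟨⟨⟨conjMatrix f M, (det_conjMatrix f M).trans hM.det_eq_one⟩, fun x => ?_⟩, rfl⟩⟩
  refine h2.mul_left_cancel ?_
  rw [hf, hf, ← dotProduct_one_kronecker_symplectic_mulVec,
    ← dotProduct_one_kronecker_symplectic_mulVec, apply_conjMatrix_mulVec,
    hM.dotProduct_mulVec_mulVec]

theorem isSpecialIsometry_neg_one {R n : Type*} [CommRing R] [Fintype n] [DecidableEq n]
    (hn : Even (Fintype.card n)) (K : Matrix n n R) : IsSpecialIsometry K (-1) where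
  det_eq_one := by simp [det_neg, hn.neg_one_pow]
  transpose_mul_mul := by simp

theorem exists_isPauliFamily_specialOrthogonal [Fact p.Prime] (hp : Odd p) {e a : ℕ}
    (hhalf : 2 * half = 2 ^ (e + 2) * a) :
    ∃ (c : specialOrthogonal p half) (x z : Fin e ⊕ Fin 2 → specialOrthogonal p half),
      c.val.val = -1 ∧ IsPauliFamily c x z := by
  have hU : Fintype.card ((Fin e → ℤˣ) × Fin a) * 2 = half := by
    simp only [Fintype.card_prod, Fintype.card_fun, Fintype.card_units_int, Fintype.card_fin]
    rw [pow_add] at hhalf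
    lia
  obtain ⟨Φ, hΦ⟩ := exists_algEquiv_specialOrthogonal hp hU
  obtain ⟨s, t, hst⟩ := ZMod.sq_add_sq p (-1)
  obtain ⟨X, Z, h, hX, hZ⟩ := exists_isPauliFamily_isSpecialIsometry hst (Fin e) (Fin a)
  obtain ⟨c, hc⟩ := hΦ (-1) (isSpecialIsometry_neg_one (by simp [parity_simps]) _)
  choose x hx using fun i => hΦ (X i) (hX i)
  choose z hz using fun i => hΦ (Z i) (hZ i)
  let coe : specialOrthogonal p half →* Matrix (Fin (2 * half)) (Fin (2 * half)) (ZMod p) :=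
    Matrix.SpecialLinearGroup.coeMonoidHom.comp (specialOrthogonal p half).subtype
  have hcoe : Function.Injective coe :=
    Matrix.SpecialLinearGroup.coeMonoidHom_injective.comp Subtype.val_injective
  refine ⟨c, x, z, by rw [hc, map_neg, map_one], .of_map hcoe ?_⟩
  rw [show coe c = Φ (-1) from hc, show coe ∘ x = Φ ∘ X from funext hx,
    show coe ∘ z = Φ ∘ Z from funext hz]
  exact h.map (MonoidHomClass.toMonoidHom Φ)

end SpecialOrthogonal

section MatrixGroup

variable {R : Type} [CommRing R]

theorem IsIrrChar.apply_of_coe_eq_neg_one {n : Type} [Fintype n] [DecidableEq n] [Nonempty n]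
    (hR : (-1 : R) ≠ 1) {G : Subgroup (GL n R)} {χ : G → ℂ} (hχ : IsIrrChar χ)
    (hfaithful : ∀ g, χ g = χ 1 → g = 1) {c : G} (hc : (c : GL n R) = -1) : χ c = -χ 1 := by
  refine hχ.apply_eq_neg_apply_one hfaithful (Subtype.ext ?_) ?_ fun g => Subtype.ext ?_
  · simp [hc]
  · rintro rfl
    obtain ⟨i⟩ := ‹Nonempty n›
    have hentry := congrArg (fun g : GL n R => g.val i i) hc
    exact hR (by simpa using hentry.symm)
  · simp [hc]

theorem exists_isPauliFamily_of_specialOrthogonal_le {p half : ℕ} [Fact p.Prime] (hp : Odd p)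
    [CharP R p] {e a : ℕ} (hhalf : 2 * half = 2 ^ (e + 2) * a)
    {G : Subgroup (GL (Fin (2 * half)) R)}
    (hG : ∀ g ∈ specialOrthogonal p half, Matrix.SpecialLinearGroup.toGL
      (Matrix.SpecialLinearGroup.map (ZMod.castHom (dvd_refl p) R) g) ∈ G) :
    ∃ (c : G) (x z : Fin e ⊕ Fin 2 → G),
      (c : GL (Fin (2 * half)) R) = -1 ∧ IsPauliFamily c x z := by
  obtain ⟨c, x, z, hc, h⟩ := exists_isPauliFamily_specialOrthogonal hp hhalf
  let φ : specialOrthogonal p half →* G :=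
    ((Matrix.SpecialLinearGroup.toGL.comp (Matrix.SpecialLinearGroup.map
      (ZMod.castHom (dvd_refl p) R))).comp (specialOrthogonal p half).subtype).codRestrict G
      fun g => hG g g.2
  refine ⟨φ c, φ ∘ x, φ ∘ z, Units.ext ?_, h.map φ⟩
  change (ZMod.castHom (dvd_refl p) R).mapMatrix c.val.val = -1
  rw [hc, map_neg, map_one]

end MatrixGroup

theorem stmt17_general {d a p : ℕ} (hd : 2 ≤ d) (hp : p.Prime) (hpodd : Odd p) {half : ℕ}
    (hhalf : 2 * half = 2 ^ d * a) {R : Type} [CommRing R] [CharP R p]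
    {G : Subgroup (GL (Fin (2 * half)) R)}
    (hG : ∀ g : Matrix.SpecialLinearGroup (Fin (2 * half)) (ZMod p),
      (∀ x, Qform p half ((g : Matrix (Fin (2 * half)) (Fin (2 * half)) (ZMod p)).mulVec x)
          = Qform p half x) →
      Matrix.SpecialLinearGroup.toGL
        (Matrix.SpecialLinearGroup.map (ZMod.castHom (dvd_refl p) R) g) ∈ G)
    {χ : G → ℂ} (hχ : ∃ (n : ℕ) (ρ : G →* GL (Fin n) ℂ), χ = charOf ρ)
    (hneg : ∀ c : G, (c : GL (Fin (2 * half)) R) = -1 → χ c = -χ 1) :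
    (∃ c : ℕ, χ 1 = ((2 ^ d * c : ℕ) : ℂ)) ∧ HasOrthDisc χ 1 ∧ HasUnitaryDisc χ 1 := by
  have : Fact p.Prime := ⟨hp⟩
  obtain ⟨e, rfl⟩ := Nat.exists_eq_add_of_le' hd
  obtain ⟨c, x, z, hc, h⟩ := exists_isPauliFamily_of_specialOrthogonal_le hpodd hhalf hG
  have hcard : Fintype.card (Fin e ⊕ Fin 2) = e + 2 := by simp
  have hc₂ : c * c = 1 := Subtype.ext (by simp [hc])
  refine ⟨?_, h.hasOrthDisc_one (hcard ▸ hd) hc₂ (hneg c hc),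
    h.hasUnitaryDisc_one (hcard ▸ hd) hc₂ (hneg c hc)⟩
  obtain ⟨n, ρ, rfl⟩ := hχ
  obtain ⟨b, rfl⟩ := hcard ▸ h.two_pow_card_dvd_of_charOf hc₂ (hneg c hc)
  exact ⟨b, charOf_one ρ⟩

/-- a generalisation of the `Q₈`-trick. -/
theorem stmt17 (d a p k : ℕ) (hd : 2 ≤ d) (ha : 1 ≤ a) (hp : p.Prime) (hpodd : Odd p)
    (hk : 0 < k) (half : ℕ) (hhalf : 2 * half = 2 ^ d * a)
    (Fq : Type) [Field Fq] [Fintype Fq] [CharP Fq p] (hFq : Fintype.card Fq = p ^ k)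
    (G : Subgroup (GL (Fin (2 * half)) Fq))
    (hG : ∀ g : Matrix.SpecialLinearGroup (Fin (2 * half)) (ZMod p),
      (∀ x, Qform p half ((g : Matrix (Fin (2 * half)) (Fin (2 * half)) (ZMod p)).mulVec x)
          = Qform p half x) →
      Matrix.SpecialLinearGroup.toGL
        (Matrix.SpecialLinearGroup.map (ZMod.castHom (dvd_refl p) Fq) g) ∈ G)
    (χ : ↥G → ℂ) (hχ : IsIrrChar χ)
    (hfaithful : ∀ g : ↥G, χ g = χ 1 → g = 1) :
    (∃ c : ℕ, χ 1 = ((2 ^ d * c : ℕ) : ℂ)) ∧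
    (charField χ ≤ realsIn → FSind χ = 1 → HasOrthDisc χ 1) ∧
    (NotReal χ → HasUnitaryDisc χ 1) := by
  have hone : (-1 : Fq) ≠ 1 := Ring.neg_one_ne_one_of_char_ne_two <|
    (ringChar.eq Fq p).symm ▸ hpodd.ne_two_of_dvd_nat dvd_rfl
  have : Nonempty (Fin (2 * half)) := ⟨⟨0, hhalf ▸ by positivity⟩⟩
  obtain ⟨hdvd, horth, hunit⟩ := stmt17_general hd hp hpodd hhalf hG
    (hχ.imp fun _ => Exists.imp fun _ => And.right)
    fun _ => hχ.apply_of_coe_eq_neg_one hone hfaithful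
  exact ⟨hdvd, fun _ _ => horth, fun _ => hunit⟩

end Paper
end
end

section
/- Let G be a finite 2-group and let χ be an irreducible complex character of G with ℚ(χ) = ℚ whose degree n := χ(1) is divisible by 4. Then: (i) for every totally complex number field L with maximal real subfield K, every representation ρ : G → GL_n(L) with character χ and every nondegenerate invariant Hermitian form H for ρ, one has (−1)^{n(n−1)/2}·det(H) ∈ N_{L/K}(L^×); (ii) for every totally real number field F, every representation ρ : G → GL_n(F) with character χ and every symmetric matrix H ∈ GL_n(F) with ρ(g)ᵀ·H·ρ(g) = H for all g ∈ G, one has (−1)^{n(n−1)/2}·det(H) ∈ (F^×)². -/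
open Matrix

noncomputable section

namespace Paper

/-! A finite 2-group has a cyclic subgroup of index at most two or a normal Klein four-group: let
`A` be a maximal cyclic normal subgroup; in the absence of the first alternative, some involution
outside `A` is central modulo `A` and centralizes the elements of order four of `A`, and together
with the central involution in `A` it generates the four-group. For an irreducible representation
of degree greater than two the first alternative is impossible in the image of the group, and one
involution of the four-group acts as `-1`. This yields isometries `b` and `g` of every invariant
form with `b ^ 2 = 1` and `g * b = -(b * g)`. The fixed space `E` of `b` is then orthogonal to
`g E`, which is isometric to `E`, and `E` and `g E` span the whole space; hence the Gram determinant
of an adapted basis is the square of the Gram determinant of `E`, which the involution of the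
field fixes. -/

open scoped commutatorElement

section PGroup

variable {P : Type*} [Group P] {p : ℕ} [Fact p.Prime] {A : Subgroup P}

theorem exists_mem_center_orderOf_eq (hP : IsPGroup p P) (K : Subgroup P) [K.Normal] [Finite K]
    (hK : K ≠ ⊥) : ∃ k ∈ K, k ∈ Subgroup.center P ∧ orderOf k = p := by
  have hdvd : p ∣ Nat.card K :=
    (hP.to_subgroup K).card_eq_or_dvd.resolve_left (mt Subgroup.card_eq_one.1 hK)
  obtain ⟨k, hfix, hk1⟩ := (hP.of_equiv ConjAct.toConjAct)
    |>.exists_fixed_point_of_prime_dvd_card_of_fixed_point K hdvd (a := 1) fun _ => smul_one _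
  have hcenter : (k : P) ∈ Subgroup.center P := by
    refine Subgroup.mem_center_iff.2 fun g => ?_
    have := congrArg Subtype.val (hfix (ConjAct.toConjAct g))
    rwa [ConjAct.Subgroup.val_conj_smul, ConjAct.toConjAct_smul, mul_inv_eq_iff_eq_mul] at this
  have hk : (k : P) ≠ 1 := fun h => hk1 (Subtype.ext h.symm)
  exact ⟨(k : P) ^ (orderOf (k : P) / p), K.pow_mem k.2 _, Subgroup.pow_mem _ hcenter _,
    orderOf_pow_orderOf_div (hP.isOfFinOrder (Fact.out : p.Prime).ne_zero _).orderOf_pos.ne'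
      (hP.dvd_orderOf hk)⟩

theorem exists_mem_notMem_forall_commutator_mem [Finite P] (hP : IsPGroup p P) {N D : Subgroup P}
    [N.Normal] [D.Normal] (hDN : ¬D ≤ N) : ∃ y ∈ D, y ∉ N ∧ y ^ p ∈ N ∧ ∀ g : P, ⁅g, y⁆ ∈ N := by
  have : (D.map (QuotientGroup.mk' N)).Normal :=
    Subgroup.Normal.map inferInstance _ (QuotientGroup.mk'_surjective N)
  obtain ⟨_, ⟨y, hyD, rfl⟩, hcenter, horder⟩ :=
    exists_mem_center_orderOf_eq (hP.to_quotient N) (D.map (QuotientGroup.mk' N)) fun h =>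
      hDN (by rwa [Subgroup.map_eq_bot_iff, QuotientGroup.ker_mk'] at h)
  obtain ⟨hpow, hne⟩ := orderOf_eq_prime_iff.1 horder
  refine ⟨y, hyD, fun hy => hne ((QuotientGroup.eq_one_iff y).2 hy),
    (QuotientGroup.eq_one_iff _).1 hpow, fun g => (QuotientGroup.eq_one_iff _).1 ?_⟩
  exact commutatorElement_eq_one_iff_mul_comm.2 (Subgroup.mem_center_iff.1 hcenter g)

theorem exists_mem_zpowers_orderOf_eq_prime_sq (hP : IsPGroup p P) {a : P} (ha : a ^ p ≠ 1) :
    ∃ s ∈ Subgroup.zpowers a, orderOf s = p ^ 2 := by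
  obtain ⟨k, hk⟩ := IsPGroup.iff_orderOf.1 hP a
  have hk2 : 2 ≤ k := by
    by_contra! hlt
    refine ha (orderOf_dvd_iff_pow_eq_one.1 ?_)
    exact hk ▸ pow_dvd_pow p (Nat.lt_succ_iff.1 hlt) |>.trans (pow_one p).dvd
  have hpos := (hP.isOfFinOrder (Fact.out : p.Prime).ne_zero a).orderOf_pos.ne'
  exact ⟨a ^ (orderOf a / p ^ 2), Subgroup.npow_mem_zpowers a _,
    orderOf_pow_orderOf_div hpos (hk ▸ pow_dvd_pow p hk2)⟩

theorem sq_eq_one_of_conj_eq_inv (hP : IsPGroup 2 P) {y t : P} (hinv : y * t * y⁻¹ = t⁻¹)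
    (hcomm : ∀ s ∈ Subgroup.zpowers t, orderOf s = 4 → Commute y s) : t ^ 2 = 1 := by
  by_contra ht
  obtain ⟨_, ⟨k, rfl⟩, hs⟩ := exists_mem_zpowers_orderOf_eq_prime_sq hP ht
  have hself : t ^ k = (t ^ k)⁻¹ := by
    calc t ^ k = y * t ^ k * y⁻¹ := (hcomm _ ⟨k, rfl⟩ hs).mul_inv_cancel.symm
      _ = (t ^ k)⁻¹ := by rw [← conj_zpow, hinv, _root_.inv_zpow]
  have : orderOf (t ^ k) ∣ 2 :=
    orderOf_dvd_of_pow_eq_one (by rw [pow_two]; exact mul_eq_one_iff_eq_inv.2 hself)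
  rw [show orderOf (t ^ k) = 4 from hs] at this
  exact absurd this (by decide)

theorem eq_one_or_eq_of_sq_eq_one [IsCyclic A] [Finite A] {u v : P} (hu : u ∈ A) (hv : v ∈ A)
    (hu2 : u ^ 2 = 1) (hv2 : v ^ 2 = 1) (hv1 : v ≠ 1) : u = 1 ∨ u = v := by
  classical
  have : Fintype A := Fintype.ofFinite A
  by_contra! hne
  let roots : Finset A := {1, ⟨u, hu⟩, ⟨v, hv⟩}
  have hcard : roots.card = 3 :=
    Finset.card_eq_three.2 ⟨1, ⟨u, hu⟩, ⟨v, hv⟩, by simpa [Subtype.ext_iff] using hne.1.symm,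
      by simpa [Subtype.ext_iff] using hv1.symm, by simpa using hne.2, rfl⟩
  have hsub : roots ⊆ Finset.univ.filter fun a : A => a ^ 2 = 1 := by
    intro a ha
    simp only [roots, Finset.mem_insert, Finset.mem_singleton] at ha
    rcases ha with rfl | rfl | rfl <;> simp [Subtype.ext_iff, hu2, hv2]
  have := (Finset.card_le_card hsub).trans (IsCyclic.card_pow_eq_one_le two_pos)
  omega

/-- The subgroup of elements of a commutative subgroup `A` whose `n`-th power is trivial.
When `A` is cyclic, its order divides `n`, which bounds the index of its centralizer. -/
def powTorsion (A : Subgroup P) [IsMulCommutative A] (n : ℕ) : Subgroup P where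
  carrier := {a | a ∈ A ∧ a ^ n = 1}
  one_mem' := ⟨A.one_mem, one_pow n⟩
  mul_mem' {a b} ha hb := ⟨A.mul_mem ha.1 hb.1, by
    have hab : Commute a b := setLike_mul_comm ha.1 hb.1
    rw [hab.mul_pow, ha.2, hb.2, one_mul]⟩
  inv_mem' ha := ⟨A.inv_mem ha.1, by rw [inv_pow, ha.2, inv_one]⟩

instance [A.Normal] [IsMulCommutative A] (n : ℕ) : (powTorsion A n).Normal where
  conj_mem a ha g := ⟨Subgroup.Normal.conj_mem ‹_› a ha.1 g, by rw [conj_pow, ha.2]; group⟩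

instance [IsCyclic A] (n : ℕ) : IsCyclic (powTorsion A n) :=
  Subgroup.isCyclic_of_le fun _ ha => ha.1

theorem card_powTorsion_dvd [IsCyclic A] (n : ℕ) : Nat.card (powTorsion A n) ∣ n := by
  rw [← IsCyclic.exponent_eq_card]
  exact Monoid.exponent_dvd_of_forall_pow_eq_one fun a => Subtype.ext a.2.2

theorem index_centralizer_le_totient (E : Subgroup P) [E.Normal] [IsCyclic E] [Finite E] :
    (Subgroup.centralizer (E : Set P)).index ≤ (Nat.card E).totient := by
  have hker : (MulAut.conjNormal (H := E)).ker = Subgroup.centralizer (E : Set P) := by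
    ext g
    simp [MonoidHom.mem_ker, MulEquiv.ext_iff, Subtype.ext_iff, Subgroup.mem_centralizer_iff,
      mul_inv_eq_iff_eq_mul, eq_comm (b := g * _)]
  rw [← hker, Subgroup.index_ker, ← IsCyclic.card_mulAut]
  exact Nat.card_le_card_of_injective _ Subtype.val_injective

theorem index_centralizer_powTorsion_four_le [A.Normal] [IsCyclic A] :
    (Subgroup.centralizer (powTorsion A 4 : Set P)).index ≤ 2 := by
  have hdvd := card_powTorsion_dvd (A := A) 4
  have : Finite (powTorsion A 4) :=
    Nat.finite_of_card_ne_zero (ne_zero_of_dvd_ne_zero four_ne_zero hdvd)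
  calc _ ≤ (Nat.card (powTorsion A 4)).totient := index_centralizer_le_totient _
    _ ≤ Nat.totient 4 := Nat.le_of_dvd (by decide) (Nat.totient_dvd_of_dvd hdvd)

theorem commutator_mul_mem [A.Normal] {y a : P} (hy : ∀ g : P, ⁅g, y⁆ ∈ A) (ha : a ∈ A) (g : P) :
    ⁅g, y * a⁆ ∈ A := by
  have hya : ⁅g, y * a⁆ = ⁅g, y⁆ * (y * ((g * a * g⁻¹) * a⁻¹) * y⁻¹) := by
    simp only [commutatorElement_def]; group
  rw [hya]
  exact A.mul_mem (hy g) (Subgroup.Normal.conj_mem ‹_› _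
    (A.mul_mem (Subgroup.Normal.conj_mem ‹_› a ha g) (A.inv_mem ha)) y)

theorem mem_of_maximal_of_le_zpowers (hA : Maximal (fun B : Subgroup P => B.Normal ∧ IsCyclic B) A)
    {y : P} (hAy : A ≤ Subgroup.zpowers y) (hy : ∀ g : P, ⁅g, y⁆ ∈ A) : y ∈ A := by
  have hnormal : (Subgroup.zpowers y).Normal := by
    refine ⟨?_⟩
    rintro _ ⟨i, rfl⟩ g
    have hconj : g * y * g⁻¹ ∈ Subgroup.zpowers y := by
      simpa [commutatorElement_def] using mul_mem (hAy (hy g)) (Subgroup.mem_zpowers y)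
    simpa only [conj_zpow] using zpow_mem hconj i
  exact hA.le_of_ge ⟨hnormal, inferInstance⟩ hAy (Subgroup.mem_zpowers y)

theorem exists_mem_pow_eq_of_maximal [Finite P] (hP : IsPGroup p P)
    (hA : Maximal (fun B : Subgroup P => B.Normal ∧ IsCyclic B) A) {y : P} (hyA : y ∉ A)
    (hypow : y ^ p ∈ A) (hcentral : ∀ g : P, ⁅g, y⁆ ∈ A) : ∃ a ∈ A, a ^ p = y ^ p := by
  obtain ⟨x, rfl⟩ := (Subgroup.isCyclic_iff_exists_zpowers_eq_top A).1 hA.prop.2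
  obtain ⟨k, hk : x ^ k = y ^ p⟩ := mem_powers_iff_mem_zpowers.2 hypow
  by_cases hpk : p ∣ k
  · obtain ⟨j, rfl⟩ := hpk
    exact ⟨x ^ j, Subgroup.npow_mem_zpowers x j, by rw [← pow_mul, mul_comm, hk]⟩
  have hcop : k.Coprime (orderOf x) := by
    obtain ⟨m, hm⟩ := IsPGroup.iff_orderOf.1 hP x
    rw [hm]
    exact (((Fact.out : p.Prime).coprime_iff_not_dvd.2 hpk).pow_left m).symm
  obtain ⟨j, hj⟩ := exists_pow_eq_self_of_coprime hcop
  have hxy : Subgroup.zpowers x ≤ Subgroup.zpowers y := by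
    rw [Subgroup.zpowers_le, ← hj, hk]
    exact pow_mem (pow_mem (Subgroup.mem_zpowers y) p) j
  exact absurd (mem_of_maximal_of_le_zpowers hA hxy hcentral) hyA

theorem exists_mul_sq_eq_one [Finite P] (hP : IsPGroup 2 P) [IsCyclic A] [A.Normal] {y a : P}
    (ha : a ∈ A) (hay : a ^ 2 = y ^ 2) (hcomm : ∀ s ∈ A, orderOf s = 4 → Commute y s) :
    ∃ c ∈ A, (y * c) ^ 2 = 1 := by
  by_cases ha2 : a ^ 2 = 1
  · exact ⟨1, A.one_mem, by rw [mul_one, ← hay, ha2]⟩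
  have hu : y * a⁻¹ = y⁻¹ * a := by
    calc y * a⁻¹ = y⁻¹ * y ^ 2 * a⁻¹ := by group
      _ = y⁻¹ * a := by rw [← hay]; group
  have huA : (y * a⁻¹) ^ 2 ∈ A := by
    have : (y * a⁻¹) ^ 2 = y * a⁻¹ * y⁻¹ * a := by
      rw [pow_two, mul_assoc (y * a⁻¹) y⁻¹ a, ← hu]
    exact this ▸ A.mul_mem (Subgroup.Normal.conj_mem ‹_› _ (A.inv_mem ha) y) ha
  have hinv : y * (y * a⁻¹) ^ 2 * y⁻¹ = ((y * a⁻¹) ^ 2)⁻¹ := by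
    calc y * (y * a⁻¹) ^ 2 * y⁻¹ = y * (y⁻¹ * a) ^ 2 * y⁻¹ := by rw [hu]
      _ = ((y * a⁻¹) ^ 2)⁻¹ := by simp only [pow_two]; group
  have hu4 : ((y * a⁻¹) ^ 2) ^ 2 = 1 :=
    sq_eq_one_of_conj_eq_inv hP hinv fun s hs => hcomm s (Subgroup.zpowers_le.2 huA hs)
  obtain ⟨s, hsa, hs⟩ := exists_mem_zpowers_orderOf_eq_prime_sq hP ha2
  have hsA : s ∈ A := Subgroup.zpowers_le.2 ha hsa
  have hs4 : (s ^ 2) ^ 2 = 1 := by rw [← pow_mul, ← pow_orderOf_eq_one s, hs, pow_two]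
  have hs2 : s ^ 2 ≠ 1 := pow_ne_one_of_lt_orderOf two_ne_zero (by rw [hs]; norm_num)
  rcases eq_one_or_eq_of_sq_eq_one huA (A.pow_mem hsA 2) hu4 hs4 hs2 with h | h
  · exact ⟨a⁻¹, A.inv_mem ha, h⟩
  · have hus : Commute (y * a⁻¹) s :=
      (hcomm s hsA hs).mul_left (setLike_mul_comm (A.inv_mem ha) hsA)
    exact ⟨a⁻¹ * s, A.mul_mem (A.inv_mem ha) hsA, by
      rw [← mul_assoc, hus.mul_pow, h, ← pow_two, hs4]⟩

theorem exists_sq_eq_one_of_maximal [Finite P] (hP : IsPGroup 2 P) [IsCyclic A]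
    (hA : Maximal (fun B : Subgroup P => B.Normal ∧ IsCyclic B) A)
    (hD : ¬Subgroup.centralizer (powTorsion A 4 : Set P) ≤ A) :
    ∃ b ∉ A, b ^ 2 = 1 ∧ (∀ g : P, ⁅g, b⁆ ∈ A) ∧ ∀ s ∈ A, orderOf s = 4 → Commute b s := by
  have : A.Normal := hA.prop.1
  obtain ⟨y, hyD, hyA, hy2, hy⟩ := exists_mem_notMem_forall_commutator_mem hP hD
  have hys : ∀ s ∈ A, orderOf s = 4 → Commute y s := fun s hs hs4 =>
    (Subgroup.mem_centralizer_iff.1 hyD s ⟨hs, by rw [← hs4, pow_orderOf_eq_one]⟩).symm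
  obtain ⟨a, ha, hay⟩ := exists_mem_pow_eq_of_maximal hP hA hyA hy2 hy
  obtain ⟨c, hc, hyc⟩ := exists_mul_sq_eq_one hP ha hay hys
  exact ⟨y * c, fun h => hyA ((A.mul_mem_cancel_right hc).1 h), hyc, commutator_mul_mem hy hc,
    fun s hs hs4 => (hys s hs hs4).mul_left (setLike_mul_comm hc hs)⟩

theorem commutator_sq_eq_one (hP : IsPGroup 2 P) {b g : P} (hb : b ^ 2 = 1)
    (hgb : ⁅g, b⁆ ∈ A) (hcomm : ∀ s ∈ A, orderOf s = 4 → Commute b s) : ⁅g, b⁆ ^ 2 = 1 := by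
  refine sq_eq_one_of_conj_eq_inv hP (y := b) ?_ fun s hs =>
    hcomm s (Subgroup.zpowers_le.2 hgb hs)
  have hb' : b⁻¹ = b := inv_eq_of_mul_eq_one_left (by rw [← pow_two, hb])
  calc b * ⁅g, b⁆ * b⁻¹ = b * g * b * g⁻¹ * (b ^ 2)⁻¹ := by
        rw [commutatorElement_def]; group
    _ = b * g * b⁻¹ * g⁻¹ := by rw [hb, inv_one, mul_one, hb']
    _ = ⁅g, b⁆⁻¹ := by rw [commutatorElement_inv, commutatorElement_def]

section FourGroup

variable {z b : P} (hzb : Commute z b) (hz2 : z ^ 2 = 1) (hb2 : b ^ 2 = 1)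

/-- The subgroup generated by two commuting elements whose squares are trivial, given by its list of
elements; it serves as the Klein four-group of a `2`-group without large cyclic subgroups. -/
def fourSubgroup : Subgroup P where
  carrier := {1, z, b, b * z}
  one_mem' := by simp
  mul_mem' := by
    rw [pow_two] at hz2 hb2
    have hbb (c : P) : b * (b * c) = c := by rw [← mul_assoc, hb2, one_mul]
    rintro _ _ (rfl | rfl | rfl | rfl) (rfl | rfl | rfl | rfl) <;>
      simp [mul_assoc, hz2, hb2, hbb, hzb.eq, hzb.left_comm]
  inv_mem' := by
    rw [pow_two] at hz2 hb2
    rintro _ (rfl | rfl | rfl | rfl) <;>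
      simp [inv_eq_of_mul_eq_one_left hz2, inv_eq_of_mul_eq_one_left hb2, hzb.eq]

theorem isKleinFour_fourSubgroup (hz1 : z ≠ 1) (hb1 : b ≠ 1) (hbz : b ≠ z) :
    IsKleinFour (fourSubgroup hzb hz2 hb2) where
  card_four := by
    have hbz1 : b * z ≠ 1 := fun h => hbz <|
      (mul_eq_one_iff_eq_inv.1 h).trans (inv_eq_of_mul_eq_one_left (pow_two z ▸ hz2))
    have : Set.ncard ({1, z, b, b * z} : Set P) = 4 := by
      rw [Set.ncard_insert_of_notMem, Set.ncard_insert_of_notMem, Set.ncard_pair] <;>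
        simp [hz1, hz1.symm, hb1, hb1.symm, hbz.symm, hbz1.symm]
    exact this
  exponent_two := by
    refine (Nat.dvd_prime Nat.prime_two).1 (Monoid.exponent_dvd_of_forall_pow_eq_one ?_)
      |>.resolve_left fun h => hz1 ?_
    · rintro ⟨_, rfl | rfl | rfl | rfl⟩ <;> simp [Subtype.ext_iff, hzb.symm.mul_pow, hz2, hb2]
    · simpa [h, Subtype.ext_iff] using
        Monoid.pow_exponent_eq_one (⟨z, .inr (.inl rfl)⟩ : fourSubgroup hzb hz2 hb2)

theorem normal_fourSubgroup (hz : z ∈ Subgroup.center P)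
    (hb : ∀ g : P, ⁅g, b⁆ = 1 ∨ ⁅g, b⁆ = z) : (fourSubgroup hzb hz2 hb2).Normal := by
  have hconj_z (g : P) : g * z * g⁻¹ = z := by
    rw [Subgroup.mem_center_iff.1 hz g, mul_inv_cancel_right]
  have hconj_b (g : P) : g * b * g⁻¹ ∈ fourSubgroup hzb hz2 hb2 := by
    rcases hb g with h | h <;> rw [commutatorElement_def, mul_inv_eq_iff_eq_mul] at h <;> rw [h]
    · exact .inr (.inr (.inl (one_mul b)))
    · exact .inr (.inr (.inr hzb))
  refine ⟨?_⟩
  rintro _ (rfl | rfl | rfl | rfl) g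
  · exact .inl (by group)
  · exact .inr (.inl (hconj_z g))
  · exact hconj_b g
  · rw [← conj_mul, hconj_z]
    exact mul_mem (hconj_b g) (.inr (.inl rfl))

end FourGroup

theorem exists_isCyclic_index_le_two_or_exists_normal_isKleinFour [Finite P] (hP : IsPGroup 2 P) :
    (∃ A : Subgroup P, IsCyclic A ∧ A.index ≤ 2) ∨ ∃ V : Subgroup P, V.Normal ∧ IsKleinFour V := by
  obtain ⟨A, hA⟩ := Set.Finite.exists_maximal
    (Set.toFinite {B : Subgroup P | B.Normal ∧ IsCyclic B}) ⟨⊥, inferInstance, inferInstance⟩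
  have : A.Normal := hA.prop.1
  have : IsCyclic A := hA.prop.2
  by_cases hD : Subgroup.centralizer (powTorsion A 4 : Set P) ≤ A
  · exact .inl ⟨A, this, (Nat.le_of_dvd (Nat.pos_of_ne_zero Subgroup.index_ne_zero_of_finite)
      (Subgroup.index_dvd_of_le hD)).trans index_centralizer_powTorsion_four_le⟩
  obtain ⟨b, hbA, hb2, hb, hbs⟩ := exists_sq_eq_one_of_maximal hP hA hD
  have hAbot : A ≠ ⊥ := by
    rintro rfl
    exact hbA (mem_of_maximal_of_le_zpowers hA bot_le hb)
  obtain ⟨z, hzA, hzc, hz⟩ := exists_mem_center_orderOf_eq hP A hAbot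
  obtain ⟨hz2, hz1⟩ := orderOf_eq_prime_iff.1 hz
  exact .inr ⟨fourSubgroup (Subgroup.mem_center_iff.1 hzc b).symm hz2 hb2,
    normal_fourSubgroup _ _ _ hzc fun g => eq_one_or_eq_of_sq_eq_one (hb g) hzA
      (commutator_sq_eq_one hP hb2 (hb g) hbs) hz2 hz1,
    isKleinFour_fourSubgroup _ _ _ hz1 (fun h => hbA (h ▸ A.one_mem)) fun h => hbA (h ▸ hzA)⟩

theorem exists_commutator_eq_of_isKleinFour {P : Type*} [Group P] {N : Subgroup P} [N.Normal]
    [IsKleinFour N] {z b : P} (hzN : z ∈ N) (hz : z ∈ Subgroup.center P) (hz1 : z ≠ 1) (hbN : b ∈ N)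
    (hb : b ∉ Subgroup.center P) : ∃ g : P, ⁅g, b⁆ = z := by
  obtain ⟨g, hg⟩ : ∃ g, g * b ≠ b * g := by simpa [Subgroup.mem_center_iff] using hb
  have hb1 : b ≠ 1 := fun h => hb (h ▸ one_mem _)
  have hbz : b ≠ z := fun h => hb (h ▸ hz)
  have hcN : g * b * g⁻¹ ∈ N := Subgroup.Normal.conj_mem ‹_› b hbN g
  have hcz : g * b * g⁻¹ ≠ z := fun h => hbz <| by
    rw [mul_inv_eq_iff_eq_mul, ← Subgroup.mem_center_iff.1 hz g] at h
    exact mul_left_cancel h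
  have hcb : g * b * g⁻¹ = z * b := congrArg Subtype.val <|
    IsKleinFour.eq_mul_of_ne_all (x := (⟨z, hzN⟩ : N)) (y := ⟨b, hbN⟩) (z := ⟨_, hcN⟩)
      (by simpa [Subtype.ext_iff] using hz1) (by simpa [Subtype.ext_iff] using hb1)
      (by simpa using hbz.symm) (by simpa [Subtype.ext_iff] using hb1)
      (by simpa using hcz) (by simpa [mul_inv_eq_iff_eq_mul] using hg)
  exact ⟨g, mul_inv_eq_iff_eq_mul.2 hcb⟩

end PGroup

section IrreducibleRepresentation

variable {k G V : Type*} [Field k] [AddCommGroup V] [Module k V]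

theorem isIrreducible_of_forall_submodule [Monoid G] [Nontrivial V] {ρ : Representation k G V}
    (h : ∀ W : Submodule k V, (∀ g, ∀ v ∈ W, ρ g v ∈ W) → W = ⊥ ∨ W = ⊤) : ρ.IsIrreducible where
  exists_pair_ne := ⟨⊥, ⊤, fun h => bot_ne_top (congrArg Subrepresentation.toSubmodule h)⟩
  eq_bot_or_eq_top W :=
    (h W.toSubmodule fun g _ hv => W.apply_mem_toSubmodule g hv).imp
      (fun h => Subrepresentation.toSubmodule_injective h)
      fun h => Subrepresentation.toSubmodule_injective h

variable [Group G]

theorem nontrivial_of_isIrreducible (ρ : Representation k G V) [ρ.IsIrreducible] : Nontrivial V :=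
  IsSimpleModule.nontrivial (MonoidAlgebra k G) ρ.asModule

variable (ρ : Representation k G V) [ρ.IsIrreducible]

theorem submodule_eq_bot_or_eq_top {W : Submodule k V} (hW : ∀ g, ∀ v ∈ W, ρ g v ∈ W) :
    W = ⊥ ∨ W = ⊤ :=
  (eq_bot_or_eq_top (⟨W, fun g _ hv => hW g _ hv⟩ : Subrepresentation ρ)).imp
    (congrArg Subrepresentation.toSubmodule) (congrArg Subrepresentation.toSubmodule)

theorem finrank_le_index_of_forall_mem_span (A : Subgroup G) [A.FiniteIndex] {v : V} (hv : v ≠ 0)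
    (hA : ∀ a ∈ A, ρ a v ∈ k ∙ v) : Module.finrank k V ≤ A.index := by
  have : Fintype (G ⧸ A) := Fintype.ofFinite _
  let orbit : G ⧸ A → V := fun q => ρ q.out v
  have hmem (g : G) : ρ g v ∈ Submodule.span k (Set.range orbit) := by
    obtain ⟨a, ha⟩ := QuotientGroup.mk_out_eq_mul A g
    obtain ⟨c, hc⟩ := Submodule.mem_span_singleton.1 (hA _ (A.inv_mem a.2))
    have hg : ρ g v = c • orbit g := by
      calc ρ g v = ρ (g * a) (ρ (a : G)⁻¹ v) := by
            rw [← Module.End.mul_apply, ← map_mul, mul_inv_cancel_right]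
        _ = c • orbit g := by simp only [orbit, ha, ← hc, map_smul]
    exact hg ▸ Submodule.smul_mem _ _ (Submodule.subset_span ⟨_, rfl⟩)
  have hspan : Submodule.span k (Set.range orbit) = ⊤ := by
    refine (submodule_eq_bot_or_eq_top ρ fun g w hw => ?_).resolve_left fun h => hv ?_
    · induction hw using Submodule.span_induction with
      | mem w hw =>
        obtain ⟨q, rfl⟩ := hw
        simpa [orbit, map_mul] using hmem (g * q.out)
      | zero => simp
      | add _ _ _ _ h₁ h₂ => simpa using add_mem h₁ h₂
      | smul c _ _ h => simpa using Submodule.smul_mem _ c h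
    · simpa [h] using hmem 1
  calc Module.finrank k V = Set.finrank k (Set.range orbit) := by
        rw [Set.finrank, hspan, finrank_top]
    _ ≤ Fintype.card (G ⧸ A) := finrank_range_le_card orbit
    _ = A.index := Nat.card_eq_fintype_card.symm

variable [FiniteDimensional k V] [IsAlgClosed k]

theorem finrank_le_index_of_isCyclic [Finite G] (ρ : Representation k G V) [ρ.IsIrreducible]
    (A : Subgroup G) [hA : IsCyclic A] : Module.finrank k V ≤ A.index := by
  obtain ⟨x, rfl⟩ := (Subgroup.isCyclic_iff_exists_zpowers_eq_top A).1 hA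
  have : Nontrivial V := nontrivial_of_isIrreducible ρ
  obtain ⟨c, hc⟩ := Module.End.exists_eigenvalue (ρ x)
  obtain ⟨v, hv⟩ := hc.exists_hasEigenvector
  refine finrank_le_index_of_forall_mem_span ρ _ hv.2 fun a ha => ?_
  obtain ⟨i, rfl⟩ := mem_powers_iff_mem_zpowers.2 ha
  exact Submodule.mem_span_singleton.2 ⟨c ^ i, by rw [← hv.pow_apply, ← map_pow]⟩

theorem eq_one_or_eq_neg_one_of_mem_center {z : G} (hz : z ∈ Subgroup.center G) (hz2 : z ^ 2 = 1) :
    ρ z = 1 ∨ ρ z = -1 := by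
  have : Nontrivial V := nontrivial_of_isIrreducible ρ
  let f := Representation.IntertwiningMap.centralMul ρ z hz
  obtain ⟨c, hc⟩ :=
    (Representation.IsIrreducible.algebraMap_intertwiningMap_bijective_of_isAlgClosed
      (k := k)).surjective f
  have hρ : ρ z = algebraMap k (Module.End k V) c :=
    congrArg Representation.IntertwiningMap.toLinearMap hc.symm
  have hc2 : c ^ 2 = 1 := (algebraMap k (Module.End k V)).injective <| by
    rw [map_pow, ← hρ, ← map_pow, hz2, map_one, map_one]
  rw [hρ]
  exact (sq_eq_one_iff.1 hc2).imp (fun h => by rw [h, map_one]) fun h => by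
    rw [h, map_neg, map_one]

theorem exists_map_commutator_eq_neg_one_of_injective [Finite G] (hG : IsPGroup 2 G)
    (hρ : Function.Injective ρ) (hdim : 2 < Module.finrank k V) :
    ∃ b g : G, b ^ 2 = 1 ∧ ρ ⁅g, b⁆ = -1 := by
  obtain ⟨A, hA, hA2⟩ | ⟨N, hN, hN4⟩ :=
    exists_isCyclic_index_le_two_or_exists_normal_isKleinFour hG
  · exact absurd ((finrank_le_index_of_isCyclic ρ A).trans hA2) hdim.not_ge
  have hNbot : N ≠ ⊥ := fun h => by
    have := hN4.card_four
    rw [Subgroup.card_eq_one.2 h] at this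
    omega
  obtain ⟨z, hzN, hz, hzo⟩ := exists_mem_center_orderOf_eq hG N hNbot
  obtain ⟨hz2, hz1⟩ := orderOf_eq_prime_iff.1 hzo
  have hρz : ρ z = -1 := (eq_one_or_eq_neg_one_of_mem_center ρ hz hz2).resolve_left
    fun h => hz1 (hρ (h.trans (map_one ρ).symm))
  obtain ⟨b, hbN, hb⟩ : ∃ b ∈ N, b ∉ ({1, z} : Set G) := by
    refine Set.exists_mem_notMem_of_ncard_lt_ncard ((Set.ncard_insert_le _ _).trans_lt ?_)
    rw [Set.ncard_singleton, show (N : Set G).ncard = 4 from hN4.card_four]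
    norm_num
  have hb2 : b ^ 2 = 1 := by
    rw [pow_two]
    exact congrArg Subtype.val (IsKleinFour.mul_self (⟨b, hbN⟩ : N))
  have hbc : b ∉ Subgroup.center G := fun hbc => hb <|
    (eq_one_or_eq_neg_one_of_mem_center ρ hbc hb2).imp (fun h => hρ (h.trans (map_one ρ).symm))
      fun h => hρ (h.trans hρz.symm)
  obtain ⟨g, hg⟩ := exists_commutator_eq_of_isKleinFour hzN hz hz1 hbN hbc
  exact ⟨b, g, hb2, by rw [hg, hρz]⟩

theorem exists_map_commutator_eq_neg_one [Finite G] (hG : IsPGroup 2 G)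
    (hdim : 2 < Module.finrank k V) : ∃ b g : G, ρ b ^ 2 = 1 ∧ ρ ⁅g, b⁆ = -1 := by
  have : Nontrivial V := nontrivial_of_isIrreducible ρ
  have : Representation.IsTrivial (ρ.comp ρ.ker.subtype) := ⟨fun g => g.2⟩
  let τ := Representation.ofQuotient ρ ρ.ker
  have : τ.IsIrreducible := isIrreducible_of_forall_submodule fun W hW =>
    submodule_eq_bot_or_eq_top ρ fun g => hW g
  have hτ : Function.Injective τ := (injective_iff_map_eq_one τ).2 fun q => by
    obtain ⟨g, rfl⟩ := QuotientGroup.mk_surjective q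
    exact fun h => (QuotientGroup.eq_one_iff (N := ρ.ker) g).2 h
  obtain ⟨b, g, hb, hg⟩ :=
    exists_map_commutator_eq_neg_one_of_injective τ (hG.to_quotient ρ.ker) hτ hdim
  obtain ⟨b, rfl⟩ := QuotientGroup.mk_surjective b
  obtain ⟨g, rfl⟩ := QuotientGroup.mk_surjective g
  exact ⟨b, g, by rw [← map_pow]; exact (QuotientGroup.eq_one_iff _).1 hb, hg⟩

end IrreducibleRepresentation

section Character

variable {k G V W : Type*} [Field k] [CharZero k] [Group G] [AddCommGroup V] [Module k V]
  [FiniteDimensional k V] [AddCommGroup W] [Module k W] [FiniteDimensional k W]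

theorem eq_one_of_forall_character_eq_finrank [Finite G] (ρ : Representation k G V)
    (hρ : ∀ g, ρ.character g = Module.finrank k V) : ρ = 1 := by
  have := Fintype.ofFinite G
  have hG : (Nat.card G : k) ≠ 0 := Nat.cast_ne_zero.2 Nat.card_pos.ne'
  let := invertibleOfNonzero hG
  have htop : ρ.invariants = ⊤ := by
    refine Submodule.eq_top_of_finrank_eq (Nat.cast_injective (R := k) ?_)
    rw [← ρ.card_inv_mul_sum_char_eq_finrank, Finset.sum_congr rfl fun g _ => hρ g]
    simp [← Nat.card_eq_fintype_card, hG]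
  ext g v
  exact ρ.mem_invariants v |>.1 (htop ▸ Submodule.mem_top) g

theorem ker_le_ker_of_character_eq [Finite G] {ρ : Representation k G V} {τ : Representation k G W}
    (h : ρ.character = τ.character) : ρ.ker ≤ τ.ker := by
  have hτ (g : ρ.ker) : Representation.character (τ.comp ρ.ker.subtype) g = Module.finrank k W := by
    calc τ.character g = ρ.character g := congrFun h.symm g
      _ = ρ.character 1 := by simp [Representation.character, MonoidHom.mem_ker.1 g.2]
      _ = Module.finrank k W := by rw [h, τ.char_one]
  exact fun g hg => MonoidHom.mem_ker.2 <|
    DFunLike.congr_fun (eq_one_of_forall_character_eq_finrank _ hτ) ⟨g, hg⟩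

theorem eq_neg_one_of_sq_eq_one_of_trace_eq {f : Module.End k V} (hf : f ^ 2 = 1)
    (htrace : LinearMap.trace k V f = -Module.finrank k V) : f = -1 := by
  have hidem : IsIdempotentElem ((2 : k)⁻¹ • (1 + f)) := by
    calc (2 : k)⁻¹ • (1 + f) * (2 : k)⁻¹ • (1 + f)
        = ((2 : k)⁻¹ * (2 : k)⁻¹) • (1 + 2 • f + f ^ 2) := by rw [smul_mul_smul_comm]; noncomm_ring
      _ = (2 : k)⁻¹ • (1 + f) := by rw [hf]; module
  have hzero : (2 : k)⁻¹ • (1 + f) = 0 :=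
    LinearMap.IsIdempotentElem.eq_zero_of_trace_eq_zero hidem (by simp [htrace])
  rw [smul_eq_zero_iff_right (by simp), add_comm] at hzero
  exact eq_neg_of_add_eq_zero_left hzero

theorem map_eq_neg_one_of_character_eq [Finite G] {ρ : Representation k G V}
    {τ : Representation k G W} (h : ρ.character = τ.character) {g : G} (hg : ρ g = -1) :
    τ g = -1 := by
  have hρ2 : g ^ 2 ∈ ρ.ker := by rw [MonoidHom.mem_ker, map_pow, hg, neg_one_sq]
  have hτ2 : τ g ^ 2 = 1 := by rw [← map_pow]; exact ker_le_ker_of_character_eq h hρ2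
  refine eq_neg_one_of_sq_eq_one_of_trace_eq hτ2 ?_
  calc τ.character g = ρ.character g := congrFun h.symm g
    _ = -ρ.character 1 := by simp [Representation.character, hg]
    _ = -Module.finrank k W := by rw [h, τ.char_one]

theorem exists_map_mul_eq_neg_map_mul [IsAlgClosed k] [Finite G] (hG : IsPGroup 2 G)
    {ρ : Representation k G V} [ρ.IsIrreducible] (hdim : 2 < Module.finrank k V)
    {τ : Representation k G W} (h : ρ.character = τ.character) :
    ∃ b g : G, τ b * τ b = 1 ∧ τ g * τ b = -(τ b * τ g) := by
  obtain ⟨b, g, hb, hgb⟩ := exists_map_commutator_eq_neg_one ρ hG hdim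
  have hτb : τ (b ^ 2) = 1 := ker_le_ker_of_character_eq h (by rw [MonoidHom.mem_ker, map_pow, hb])
  refine ⟨b, g, by rw [← map_mul, ← pow_two, hτb], ?_⟩
  calc τ g * τ b = τ ⁅g, b⁆ * (τ b * τ g) := by
        simp only [← map_mul, commutatorElement_def]; group
    _ = -(τ b * τ g) := by rw [map_eq_neg_one_of_character_eq h hgb, neg_one_mul]

end Character

section MatrixRepresentation

variable {G R ι : Type*} [Group G] [CommRing R] [Fintype ι] [DecidableEq ι]

/-- The action on column vectors of a matrix representation, bundled so that the library's
representation theory applies to it. -/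
def toRepresentation (ρ : G →* GL ι R) : Representation R G (ι → R) :=
  (toLinAlgEquiv' : Matrix ι ι R ≃ₐ[R] _).toRingEquiv.toMonoidHom.comp ((Units.coeHom _).comp ρ)

theorem toRepresentation_apply (ρ : G →* GL ι R) (g : G) :
    toRepresentation ρ g = toLinAlgEquiv' (ρ g : Matrix ι ι R) := rfl

end MatrixRepresentation

section ComplexCharacter

variable {G : Type} [Group G] {n : ℕ} {ρ : G →* GL (Fin n) ℂ}

theorem character_toRepresentation : (toRepresentation ρ).character = charOf ρ := by
  ext g
  exact trace_toLin'_eq _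

theorem IsIrredRep.isIrreducible (hρ : IsIrredRep ρ) : (toRepresentation ρ).IsIrreducible := by
  have : NeZero n := ⟨hρ.1.ne'⟩
  exact isIrreducible_of_forall_submodule hρ.2

theorem eq_of_charOf_eq {m : ℕ} {τ : G →* GL (Fin m) ℂ} (h : charOf τ = charOf ρ) : m = n := by
  simpa [charOf] using congrFun h 1

theorem IsIrrChar.pos_of_eq_charOf {χ : G → ℂ} (hχ : IsIrrChar χ) (hρ : χ = charOf ρ) :
    0 < n := by
  obtain ⟨m, ρ₀, hirr, rfl⟩ := hχ
  exact eq_of_charOf_eq hρ ▸ hirr.1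

theorem IsIrrChar.exists_mul_eq_neg_mul [Finite G] (hG : IsPGroup 2 G) {χ : G → ℂ}
    (hχ : IsIrrChar χ) (hρ : χ = charOf ρ) (hn : 2 < n) :
    ∃ b g : G, (ρ b : Matrix (Fin n) (Fin n) ℂ) * ρ b = 1 ∧
      (ρ g : Matrix (Fin n) (Fin n) ℂ) * ρ b = -(ρ b * ρ g) := by
  obtain ⟨m, ρ₀, hirr, rfl⟩ := hχ
  have := hirr.isIrreducible
  have hchar : (toRepresentation ρ₀).character = (toRepresentation ρ).character := by
    rw [character_toRepresentation, character_toRepresentation, hρ]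
  obtain ⟨b, g, hb, hgb⟩ :=
    exists_map_mul_eq_neg_map_mul hG (by simpa [eq_of_charOf_eq hρ] using hn) hchar
  simp only [toRepresentation_apply, ← map_mul, ← map_neg] at hb hgb
  exact ⟨b, g, toLinAlgEquiv'.injective (hb.trans (map_one _).symm), toLinAlgEquiv'.injective hgb⟩

end ComplexCharacter

section Hermitian

variable {K : Type*} [Field K] [NeZero (2 : K)]

section AnticommutingEndomorphisms

variable {V : Type*} [AddCommGroup V] [Module K V] {f g : Module.End K V}

theorem bijective_coprod_eigenspace_of_anticommute (hf : f * f = 1) (hg : IsUnit g)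
    (hgf : g * f = -(f * g)) :
    Function.Bijective ((f.eigenspace 1).subtype.coprod (g ∘ₗ (f.eigenspace 1).subtype)) := by
  obtain ⟨u, rfl⟩ := hg
  have hff (v : V) : f (f v) = v := LinearMap.congr_fun hf v
  have hfg (v : V) : f (u.1 v) = -u.1 (f v) := by
    simpa using congrArg Neg.neg (LinearMap.congr_fun hgf v).symm
  have hgg (v : V) : u.1 (u⁻¹.1 v) = v := LinearMap.congr_fun u.mul_inv v
  have hinj : Function.Injective u.1 := ((Module.End.isUnit_iff _).1 u.isUnit).injective
  constructor
  · refine (injective_iff_map_eq_zero _).2 ?_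
    rintro ⟨⟨a, ha⟩, ⟨b, hb⟩⟩ (hab : a + u.1 b = 0)
    rw [Module.End.mem_eigenspace_iff, one_smul] at ha hb
    have hab' : a - u.1 b = 0 := by
      simpa only [map_add, hfg, ha, hb, ← sub_eq_add_neg, map_zero] using congrArg f hab
    have ha0 : a = 0 := by
      have : (2 : K) • a = (a + u.1 b) + (a - u.1 b) := by module
      rw [hab, hab', add_zero] at this
      exact (smul_eq_zero.1 this).resolve_left two_ne_zero
    have hb0 : b = 0 := hinj (by simpa [ha0] using hab)
    simp [ha0, hb0]
  · intro v
    have hplus : (2 : K)⁻¹ • (v + f v) ∈ f.eigenspace 1 := by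
      simp [hff, add_comm]
    have hminus : u⁻¹.1 ((2 : K)⁻¹ • (v - f v)) ∈ f.eigenspace 1 := by
      rw [Module.End.mem_eigenspace_iff, one_smul]
      exact hinj (by rw [← neg_inj, ← hfg, hgg]; simp [hff, ← smul_neg])
    refine ⟨(⟨_, hplus⟩, ⟨_, hminus⟩), ?_⟩
    calc (2 : K)⁻¹ • (v + f v) + u.1 (u⁻¹.1 ((2 : K)⁻¹ • (v - f v)))
        = (2 : K)⁻¹ • (2 : K) • v := by rw [hgg]; module
      _ = v := inv_smul_smul₀ two_ne_zero v

theorem exists_basis_of_anticommute_s18 [FiniteDimensional K V] (hf : f * f = 1) (hg : IsUnit g)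
    (hgf : g * f = -(f * g)) :
    ∃ (m : ℕ) (b : Module.Basis (Fin m ⊕ Fin m) K V),
      ∀ i, f (b (.inl i)) = b (.inl i) ∧ b (.inr i) = g (b (.inl i)) := by
  let F := LinearEquiv.ofBijective _ (bijective_coprod_eigenspace_of_anticommute hf hg hgf)
  let b := Module.finBasis K (f.eigenspace 1)
  refine ⟨_, (b.prod b).map F, fun i => ⟨?_, ?_⟩⟩
  · have := Module.End.mem_eigenspace_iff.1 (b i).2
    simpa [F] using this
  · simp [F]

end AnticommutingEndomorphisms

variable {m n : Type*} [Fintype n] {B C H : Matrix n n K}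

theorem exists_isUnit_det_fromCols_of_anticommute [DecidableEq n] (hB : B * B = 1) (hC : IsUnit C)
    (hCB : C * B = -(B * C)) :
    ∃ (m : ℕ) (U : Matrix n (Fin m) K) (e : Fin m ⊕ Fin m ≃ n), B * U = U ∧
      IsUnit ((fromCols U (C * U)).submatrix id e.symm).det := by
  let φ := toLinAlgEquiv' (R := K) (n := n)
  obtain ⟨m, b, hb⟩ := exists_basis_of_anticommute_s18 (f := φ B) (g := φ C)
    (by rw [← map_mul, hB, map_one]) (hC.map φ) (by rw [← map_mul, hCB, map_neg, map_mul])
  let e := b.indexEquiv (Pi.basisFun K n)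
  refine ⟨m, .of fun k i => b (.inl i) k, e, ?_, ?_⟩
  · ext k i
    exact congrFun (hb i).1 k
  · convert (Pi.basisFun K n).isUnit_det (b.reindex e) using 1
    rw [Module.Basis.det_apply]
    congr 1
    ext k j
    obtain ⟨i | i, rfl⟩ := e.surjective j
    · simp [Module.Basis.toMatrix_apply]
    · simp [Module.Basis.toMatrix_apply, (hb i).2, φ, Matrix.mul_apply, mulVec, dotProduct]

section StarRing

variable [StarRing K]

theorem conjTranspose_mul_mul_eq_zero_of_anticommute {U : Matrix n m K} (hBU : B * U = U)
    (hCB : C * B = -(B * C)) (hB : Bᴴ * H * B = H) : Uᴴ * H * (C * U) = 0 := by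
  have hBCU : B * (C * U) = -(C * U) := by
    rw [← Matrix.mul_assoc, ← neg_neg (B * C), ← hCB, Matrix.neg_mul, Matrix.mul_assoc, hBU]
  have hself : Uᴴ * H * (C * U) = -(Uᴴ * H * (C * U)) := by
    calc Uᴴ * H * (C * U) = Uᴴ * (Bᴴ * H * B) * (C * U) := by rw [hB]
      _ = (B * U)ᴴ * H * (B * (C * U)) := by
        simp only [conjTranspose_mul, Matrix.mul_assoc]
      _ = _ := by rw [hBU, hBCU, Matrix.mul_neg]
  refine (smul_eq_zero.1 (?_ : (2 : K) • _ = _)).resolve_left two_ne_zero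
  rw [two_smul, add_eq_zero_iff_eq_neg]
  exact hself

theorem conjTranspose_fromCols_mul_mul_fromCols_of_anticommute {U : Matrix n m K} (hBU : B * U = U)
    (hCB : C * B = -(B * C)) (hB : Bᴴ * H * B = H) (hC : Cᴴ * H * C = H) (hH : H.IsHermitian) :
    (fromCols U (C * U))ᴴ * H * fromCols U (C * U) = fromBlocks (Uᴴ * H * U) 0 0 (Uᴴ * H * U) := by
  have hzero : Uᴴ * H * (C * U) = 0 := conjTranspose_mul_mul_eq_zero_of_anticommute hBU hCB hB
  have hzero' : (C * U)ᴴ * H * U = 0 := by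
    simpa [hH.eq, Matrix.mul_assoc] using congrArg conjTranspose hzero
  have hCU : (C * U)ᴴ * H * (C * U) = Uᴴ * H * U := by
    calc (C * U)ᴴ * H * (C * U) = Uᴴ * (Cᴴ * H * C) * U := by
          simp only [conjTranspose_mul, Matrix.mul_assoc]
      _ = Uᴴ * H * U := by rw [hC]
  rw [conjTranspose_fromCols_eq_fromRows_conjTranspose, fromRows_mul, fromRows_mul_fromCols, hzero,
    hzero', hCU]

theorem exists_det_eq_mul_star_of_anticommute [DecidableEq n] (hB : B * B = 1) (hC : IsUnit C)
    (hCB : C * B = -(B * C)) (hBH : Bᴴ * H * B = H) (hCH : Cᴴ * H * C = H) (hH : H.IsHermitian)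
    (hdet : H.det ≠ 0) : ∃ z : K, z ≠ 0 ∧ H.det = z * star z := by
  obtain ⟨m, U, e, hBU, hP⟩ := exists_isUnit_det_fromCols_of_anticommute hB hC hCB
  set P := (fromCols U (C * U)).submatrix id e.symm
  have hgram : Pᴴ * H * P =
      (fromBlocks (Uᴴ * H * U) 0 0 (Uᴴ * H * U)).submatrix e.symm e.symm := by
    rw [← conjTranspose_fromCols_mul_mul_fromCols_of_anticommute hBU hCB hBH hCH hH]
    rfl
  set d := (Uᴴ * H * U).det
  have hd : star d = d := by
    rw [← det_conjTranspose]
    simp [hH.eq, Matrix.mul_assoc, d]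
  have hdets : star P.det * H.det * P.det = d * d := by
    rw [← det_conjTranspose, ← det_mul, ← det_mul, hgram, det_submatrix_equiv_self,
      det_fromBlocks_zero₂₁]
  have hP0 : star P.det ≠ 0 := star_ne_zero.2 hP.ne_zero
  have hd0 : d ≠ 0 := by
    rintro h
    rw [h, mul_zero] at hdets
    exact mul_ne_zero (mul_ne_zero hP0 hdet) hP.ne_zero hdets
  refine ⟨d / P.det, div_ne_zero hd0 hP.ne_zero, ?_⟩
  rw [star_div₀, hd]
  field_simp [hP.ne_zero, hP0]
  linear_combination hdets

end StarRing

theorem exists_mem_det_eq_mul_map_of_anticommute [DecidableEq n] {L : Subfield K} {σ : K →+* K}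
    (hL : ∀ z ∈ L, σ z ∈ L) (hσ : ∀ z ∈ L, σ (σ z) = z) (hBL : ∀ i j, B i j ∈ L)
    (hCL : ∀ i j, C i j ∈ L) (hHL : ∀ i j, H i j ∈ L) (hB : B * B = 1) (hC : IsUnit C)
    (hCB : C * B = -(B * C)) (hBH : (B.map σ)ᵀ * H * B = H) (hCH : (C.map σ)ᵀ * H * C = H)
    (hH : (H.map σ)ᵀ = H) (hdet : H.det ≠ 0) : ∃ z ∈ L, z ≠ 0 ∧ H.det = z * σ z := by
  let φ : Matrix n n L →+* Matrix n n K := L.subtype.mapMatrix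
  have hφ : Function.Injective φ := Matrix.map_injective Subtype.val_injective
  have hlift {M : Matrix n n K} (hM : ∀ i j, M i j ∈ L) : ∃ M' : Matrix n n L, φ M' = M :=
    ⟨.of fun i j => ⟨M i j, hM i j⟩, rfl⟩
  obtain ⟨B, rfl⟩ := hlift hBL
  obtain ⟨C, rfl⟩ := hlift hCL
  obtain ⟨H, rfl⟩ := hlift hHL
  let : StarRing L :=
    { star := fun z => ⟨σ z, hL z z.2⟩
      star_involutive := fun z => Subtype.ext (hσ z z.2)
      star_mul := fun z w => Subtype.ext ((map_mul σ _ _).trans (mul_comm _ _))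
      star_add := fun z w => Subtype.ext (map_add σ _ _) }
  have : NeZero (2 : L) := ⟨fun h => two_ne_zero (congrArg L.subtype h)⟩
  have hdetφ (M : Matrix n n L) : (φ M).det = M.det := (L.subtype.map_det M).symm
  have hstar (M : Matrix n n L) : φ Mᴴ = ((φ M).map σ)ᵀ := rfl
  have hC' : IsUnit C := by
    rw [isUnit_iff_isUnit_det, isUnit_iff_ne_zero] at hC ⊢
    exact fun h => hC (by rw [hdetφ, h, L.coe_zero])
  obtain ⟨z, hz, hHz⟩ := exists_det_eq_mul_star_of_anticommute (B := B) (C := C) (H := H)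
    (hφ (by simpa using hB)) hC' (hφ (by simpa using hCB))
    (hφ (by simpa only [map_mul, hstar] using hBH)) (hφ (by simpa only [map_mul, hstar] using hCH))
    (hφ hH) fun h => hdet (by rw [hdetφ, h, L.coe_zero])
  exact ⟨z, z.2, fun h => hz (Subtype.ext h), by rw [hdetφ, hHz]; rfl⟩

end Hermitian

theorem neg_one_pow_mul_pred_div_two_eq_one {M : Type*} [Monoid M] [HasDistribNeg M] {n : ℕ}
    (hn : 4 ∣ n) : (-1 : M) ^ (n * (n - 1) / 2) = 1 := by
  obtain ⟨k, rfl⟩ := hn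
  rw [show 4 * k * (4 * k - 1) = 2 * (2 * (k * (4 * k - 1))) by ring,
    Nat.mul_div_cancel_left _ two_pos]
  exact (even_two_mul _).neg_one_pow

theorem stmt18_general {G : Type} [Group G] [Finite G] (h2 : IsPGroup 2 G) {χ : G → ℂ}
    (hχ : IsIrrChar χ) {n : ℕ} (h4 : 4 ∣ n) {L : Subfield ℂ} {σ : ℂ →+* ℂ}
    (hL : ∀ z ∈ L, σ z ∈ L) (hσ : ∀ z ∈ L, σ (σ z) = z) {ρ : G →* GL (Fin n) ℂ}
    (hρ : χ = charOf ρ) (hρL : ∀ g i j, (ρ g : Matrix (Fin n) (Fin n) ℂ) i j ∈ L)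
    {H : Matrix (Fin n) (Fin n) ℂ} (hHL : ∀ i j, H i j ∈ L) (hdet : IsUnit H.det)
    (hH : (H.map σ)ᵀ = H)
    (hinv : ∀ g, ((ρ g : Matrix (Fin n) (Fin n) ℂ).map σ)ᵀ * H * ρ g = H) :
    ∃ z ∈ L, z ≠ 0 ∧ (-1 : ℂ) ^ (n * (n - 1) / 2) * H.det = z * σ z := by
  have hn : 2 < n := by
    have := Nat.le_of_dvd (hχ.pos_of_eq_charOf hρ) h4
    omega
  obtain ⟨b, g, hb, hgb⟩ := hχ.exists_mul_eq_neg_mul h2 hρ hn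
  rw [neg_one_pow_mul_pred_div_two_eq_one h4, one_mul]
  exact exists_mem_det_eq_mul_map_of_anticommute hL hσ (hρL b) (hρL g) hHL hb (ρ g).isUnit hgb
    (hinv b) (hinv g) hH hdet.ne_zero

/-- an irreducible rational character of a `2`-group of degree
divisible by `4` has trivial unitary discriminant over any totally complex number
field and trivial orthogonal discriminant over any totally real number field. -/
theorem stmt18 (G : Type) [Group G] [Finite G] (h2 : IsPGroup 2 G)
    (χ : G → ℂ) (hχ : IsIrrChar χ) (hrat : IsRationalChar χ)
    (n : ℕ) (hn : χ 1 = (n : ℂ)) (h4 : 4 ∣ n) :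
    (∀ L : Subfield ℂ,
      (∀ z ∈ L, (starRingEnd ℂ) z ∈ L) →
      ¬ (L : Set ℂ) ⊆ Set.range ((↑) : ℝ → ℂ) →
      FiniteDimensional ℚ ↥L →
      IsEmpty (↥L →+* ℝ) →
      ∀ ρ : G →* GL (Fin n) ℂ, χ = charOf ρ →
        (∀ g i j, ((ρ g : Matrix (Fin n) (Fin n) ℂ)) i j ∈ L) →
        ∀ H : Matrix (Fin n) (Fin n) ℂ,
          (∀ i j, H i j ∈ L) → IsUnit H.det → H.conjTranspose = H →
          (∀ g, ((ρ g : Matrix (Fin n) (Fin n) ℂ)).conjTranspose * H *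
            (ρ g : Matrix (Fin n) (Fin n) ℂ) = H) →
          ∃ z ∈ L, z ≠ 0 ∧
            (-1 : ℂ) ^ (n * (n - 1) / 2) * H.det = z * (starRingEnd ℂ) z) ∧
    (∀ K : Subfield ℂ,
      (K : Set ℂ) ⊆ Set.range ((↑) : ℝ → ℂ) →
      FiniteDimensional ℚ ↥K →
      (∀ τ : ↥K →+* ℂ, ∀ x : ↥K, (τ x).im = 0) →
      ∀ ρ : G →* GL (Fin n) ℂ, χ = charOf ρ →
        (∀ g i j, ((ρ g : Matrix (Fin n) (Fin n) ℂ)) i j ∈ K) →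
        ∀ H : Matrix (Fin n) (Fin n) ℂ,
          (∀ i j, H i j ∈ K) → IsUnit H.det → H.transpose = H →
          (∀ g, ((ρ g : Matrix (Fin n) (Fin n) ℂ)).transpose * H *
            (ρ g : Matrix (Fin n) (Fin n) ℂ) = H) →
          ∃ z ∈ K, z ≠ 0 ∧
            (-1 : ℂ) ^ (n * (n - 1) / 2) * H.det = z ^ 2) := by
  exact ⟨fun L hL _ _ _ ρ hρ hρL H hHL hdet hH hinv =>
      stmt18_general h2 hχ h4 hL (fun z _ => Complex.conj_conj z) hρ hρL hHL hdet hH hinv,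
    fun K _ _ _ ρ hρ hρK H hHK hdet hH hinv => by
      simpa only [pow_two, RingHom.id_apply] using stmt18_general (σ := RingHom.id ℂ) h2 hχ h4
        (fun _ hz => hz) (fun _ _ => rfl) hρ hρK hHK hdet hH hinv⟩

end Paper
end
end

section
/- Let G be a finite group, U ≤ G a subgroup, and ψ an irreducible complex character of U such that χ := Ind_U^G ψ is an irreducible character of G. Then ℚ(χ) ⊆ ℚ(ψ). Moreover, let Ψ be the set of irreducible constituents of the restriction of χ to U that have degree ψ(1); if the cardinality of Ψ is odd, then there exists ψ' ∈ Ψ with ℚ(χ) ⊆ ℚ(ψ') and [ℚ(ψ') : ℚ(χ)] odd. -/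
open Matrix

noncomputable section

namespace Paper

open scoped Classical in
/-- The character of `G` induced from a character `ψ` of the subgroup `U`. -/
def inducedChar {G : Type} [Group G] (U : Subgroup G) (ψ : ↥U → ℂ) : G → ℂ :=
  fun g => (Nat.card ↥U : ℂ)⁻¹ *
    ∑ᶠ x : G, if h : x⁻¹ * g * x ∈ U then ψ (⟨x⁻¹ * g * x, h⟩ : ↥U) else 0

/-- The scalar product of two class functions on a finite group. -/
def cInner {U : Type} [Group U] (α β : U → ℂ) : ℂ :=
  (Nat.card U : ℂ)⁻¹ * ∑ᶠ u : U, α u * (starRingEnd ℂ) (β u)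

/-!
By Frobenius reciprocity, an irreducible constituent `φ` of the restriction of `χ` to `U` yields a
nonzero `G`-map from the representation of `χ` to the one coinduced from `φ`; it is injective since
`χ` is irreducible. If `φ 1 = ψ 1`, the dimensions agree, so `χ` is also induced from `φ` and
`ℚ(χ) ⊆ ℚ(φ)`. The group `Aut(ℂ / ℚ(χ))` permutes the constituents of degree `ψ 1`, and the orbit
of `φ` has `[ℚ(φ) : ℚ(χ)]` elements; if the number of these constituents is not divisible by `d`,
neither is the length of some orbit.
-/

theorem exists_algEquiv_of_isTranscendenceBasis {F E₁ E₂ ι : Type*} [Field F] [Field E₁]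
    [Field E₂] [Algebra F E₁] [Algebra F E₂] [IsAlgClosed E₁] [IsAlgClosed E₂]
    {v : ι → E₁} {w : ι → E₂} (hv : IsTranscendenceBasis F v) (hw : IsTranscendenceBasis F w) :
    Nonempty (E₁ ≃ₐ[F] E₂) := by
  let := IsAlgClosed.isAlgClosure_of_transcendence_basis v hv
  let := IsAlgClosed.isAlgClosure_of_transcendence_basis w hw
  let e : Algebra.adjoin F (Set.range v) ≃ₐ[F] Algebra.adjoin F (Set.range w) :=
    hv.1.aevalEquiv.symm.trans hw.1.aevalEquiv
  refine ⟨AlgEquiv.ofRingEquiv (f := IsAlgClosure.equivOfEquiv E₁ E₂ e.toRingEquiv) fun a ↦ ?_⟩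
  calc IsAlgClosure.equivOfEquiv E₁ E₂ e.toRingEquiv (algebraMap F E₁ a)
      = algebraMap (Algebra.adjoin F (Set.range w)) E₂ (e (algebraMap F _ a)) :=
        IsAlgClosure.equivOfEquiv_algebraMap E₁ E₂ e.toRingEquiv (algebraMap F _ a)
    _ = algebraMap F E₂ a := by
        rw [e.commutes, ← IsScalarTower.algebraMap_apply]

theorem exists_algEquiv_comp_eq {F L E₁ E₂ ι : Type*} [Field F] [Field L] [Field E₁] [Field E₂]
    [Algebra F L] [Algebra F E₁] [Algebra F E₂] [Algebra.IsAlgebraic F L] [IsAlgClosed E₁]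
    [IsAlgClosed E₂] {v : ι → E₁} {w : ι → E₂} (hv : IsTranscendenceBasis F v)
    (hw : IsTranscendenceBasis F w) (f : L →ₐ[F] E₁) (g : L →ₐ[F] E₂) :
    ∃ σ : E₁ ≃ₐ[F] E₂, (σ : E₁ →ₐ[F] E₂).comp f = g := by
  let := (f : L →+* E₁).toAlgebra
  let := (g : L →+* E₂).toAlgebra
  have : IsScalarTower F L E₁ := .of_algebraMap_eq' f.comp_algebraMap.symm
  have : IsScalarTower F L E₂ := .of_algebraMap_eq' g.comp_algebraMap.symm
  obtain ⟨σ⟩ := exists_algEquiv_of_isTranscendenceBasis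
    ((Algebra.IsAlgebraic.isTranscendenceBasis_iff F L).1 hv)
    ((Algebra.IsAlgebraic.isTranscendenceBasis_iff F L).1 hw)
  exact ⟨σ.restrictScalars F, AlgHom.ext σ.commutes⟩

open IntermediateField in
theorem card_orbit_eq_finrank_adjoin {F E ι : Type*} [Field F] [PerfectField F] [Field E]
    [Algebra F E] [IsAlgClosed E] [Finite ι] {x : ι → E} (hx : ∀ i, IsIntegral F (x i)) :
    Nat.card (MulAction.orbit (E ≃ₐ[F] E) x) = Module.finrank F (adjoin F (Set.range x)) := by
  let L := adjoin F (Set.range x)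
  have : FiniteDimensional F L := finiteDimensional_adjoin <| by
    simpa only [Set.forall_mem_range] using hx
  let image : (L →ₐ[F] E) → ι → E := fun τ i ↦ τ ⟨x i, subset_adjoin F _ ⟨i, rfl⟩⟩
  have image_injective : Function.Injective image := fun τ₁ τ₂ h ↦
    algHom_ext_of_eq_adjoin F rfl <| by
      rintro _ ⟨i, rfl⟩
      exact congrFun h i
  have range_image : Set.range image = MulAction.orbit (E ≃ₐ[F] E) x := by
    apply Set.Subset.antisymm
    · rintro _ ⟨τ, rfl⟩
      obtain ⟨s, hs⟩ := exists_isTranscendenceBasis F E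
      obtain ⟨σ, rfl⟩ := exists_algEquiv_comp_eq hs hs L.val τ
      exact ⟨σ, rfl⟩
    · rintro _ ⟨σ, rfl⟩
      exact ⟨(σ : E →ₐ[F] E).comp L.val, rfl⟩
  rw [← range_image, Nat.card_range_of_injective image_injective, Nat.card_eq_fintype_card,
    AlgHom.card]

theorem exists_not_dvd_card_orbit {Γ X : Type*} [Group Γ] [MulAction Γ X] {d : ℕ} {S : Set X}
    (hS : ∀ (γ : Γ), ∀ x ∈ S, γ • x ∈ S) (hd : ¬ d ∣ S.ncard) :
    ∃ x ∈ S, ¬ d ∣ Nat.card (MulAction.orbit Γ x) := by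
  let T : SubMulAction Γ X := ⟨S, fun γ {x} hx ↦ hS γ x hx⟩
  have : Finite T := Set.finite_of_ncard_ne_zero fun h ↦ hd (h ▸ dvd_zero d)
  have := Fintype.ofFinite (Quotient (MulAction.orbitRel Γ T))
  by_contra! h
  refine hd ?_
  change d ∣ Nat.card T
  rw [Nat.card_congr (MulAction.selfEquivSigmaOrbits Γ T), Nat.card_sigma]
  refine Finset.dvd_sum fun ω _ ↦ ?_
  rw [← Nat.card_image_of_injective Subtype.val_injective, SubMulAction.val_image_orbit]
  exact h _ ω.out.2

theorem trace_eq_sum_trace_proj_comp_single {R M ι : Type*} [CommRing R] [AddCommGroup M]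
    [Module R M] [Module.Free R M] [Module.Finite R M] [Fintype ι] [DecidableEq ι]
    (f : Module.End R (ι → M)) :
    LinearMap.trace R (ι → M) f =
      ∑ i, LinearMap.trace R M (.proj i ∘ₗ f ∘ₗ .single R (fun _ ↦ M) i) := by
  have hf : f = ∑ i, (LinearMap.single R (fun _ ↦ M) i ∘ₗ LinearMap.proj i) ∘ₗ f := by
    ext
    simp [Finset.sum_apply]
  conv_lhs => rw [hf, map_sum]
  refine Finset.sum_congr rfl fun i _ ↦ ?_
  rw [LinearMap.comp_assoc, LinearMap.trace_comp_comm', LinearMap.comp_assoc]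

open Polynomial in
theorem isIntegral_trace {R K n : Type*} [CommRing R] [Field K] [IsAlgClosed K] [Algebra R K]
    [Fintype n] [DecidableEq n] {A : Matrix n n K} (hA : IsIntegral R A) :
    IsIntegral R A.trace := by
  cases isEmpty_or_nonempty n
  · simpa [Matrix.trace] using isIntegral_zero
  obtain ⟨p, hp, hpA⟩ := hA
  rw [Matrix.trace_eq_sum_roots_charpoly]
  refine IsIntegral.multiset_sum fun μ hμ ↦ ⟨p, hp, ?_⟩
  have hμA : μ ∈ spectrum K A :=
    Matrix.mem_spectrum_of_isRoot_charpoly (isRoot_of_mem_roots hμ)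
  have := spectrum.subset_polynomial_aeval A (p.map (algebraMap R K)) ⟨μ, hμA, rfl⟩
  rw [aeval_map_algebraMap, aeval_def, hpA, spectrum.zero_eq] at this
  simpa [eval_map] using this

section Coind

variable {k G V : Type*} [Field k] [Group G] {U : Subgroup G} [AddCommGroup V] [Module k V]

/-- The averaging projection of the space of all functions `G → V` onto the space
`Representation.coindV` of the representation coinduced from `β`. -/
def coindProj [Fintype U] (β : Representation k U V) : (G → V) →ₗ[k] G → V :=
  (Nat.card U : k)⁻¹ • ∑ u : U, LinearMap.pi fun x ↦ β u ∘ₗ LinearMap.proj ((u : G)⁻¹ * x)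

theorem coindProj_apply [Fintype U] (β : Representation k U V) (f : G → V) (x : G) :
    coindProj β f x = (Nat.card U : k)⁻¹ • ∑ u : U, β u (f ((u : G)⁻¹ * x)) := by
  simp [coindProj]

theorem coindProj_mem_coindV [Fintype U] (β : Representation k U V) (f : G → V) :
    coindProj β f ∈ Representation.coindV U.subtype β := by
  intro u x
  rw [coindProj_apply, coindProj_apply, map_smul, map_sum, ← Equiv.sum_comp (Equiv.mulLeft u)]
  simp [mul_assoc]

theorem coindProj_of_mem_coindV [Fintype U] (hU : (Nat.card U : k) ≠ 0) {β : Representation k U V}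
    {f : G → V} (hf : f ∈ Representation.coindV U.subtype β) : coindProj β f = f := by
  ext x
  have summand (u : U) : β u (f ((u : G)⁻¹ * x)) = f x := by
    rw [← hf u]
    simp
  rw [coindProj_apply, Finset.sum_congr rfl fun u _ ↦ summand u, Finset.sum_const,
    Finset.card_univ, ← Nat.card_eq_fintype_card, ← Nat.cast_smul_eq_nsmul k, inv_smul_smul₀ hU]

open scoped Classical in
theorem character_coind [Finite G] [FiniteDimensional k V] (hU : (Nat.card U : k) ≠ 0)
    (β : Representation k U V) (g : G) :
    (Representation.coind U.subtype β).character g = (Nat.card U : k)⁻¹ *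
      ∑ᶠ x : G, if h : x⁻¹ * g * x ∈ U then β.character ⟨x⁻¹ * g * x, h⟩ else 0 := by
  have := Fintype.ofFinite G
  let f : Module.End k (G → V) := LinearMap.funLeft k V (· * g) ∘ₗ coindProj β
  have hf (a : G → V) : f a ∈ Representation.coindV U.subtype β := fun u x ↦ by
    simpa [f, LinearMap.funLeft_apply, mul_assoc] using coindProj_mem_coindV β a u (x * g)
  have coind_eq : Representation.coind U.subtype β g = f.restrict fun a _ ↦ hf a :=
    LinearMap.ext fun a ↦ Subtype.ext <|
      congrArg (fun a x ↦ a (x * g)) (coindProj_of_mem_coindV hU a.2).symm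
  have block (x : G) : LinearMap.proj x ∘ₗ f ∘ₗ LinearMap.single k (fun _ ↦ V) x =
      (Nat.card U : k)⁻¹ • if h : x * g * x⁻¹ ∈ U then β ⟨x * g * x⁻¹, h⟩ else 0 := by
    ext v
    have hu (u : U) : (u : G)⁻¹ * (x * g) = x ↔ (u : G) = x * g * x⁻¹ := by
      rw [inv_mul_eq_iff_eq_mul, eq_mul_inv_iff_mul_eq, eq_comm]
    simp only [f, LinearMap.comp_apply, LinearMap.coe_single, LinearMap.proj_apply,
      LinearMap.funLeft_apply, LinearMap.smul_apply, coindProj_apply, Pi.single_apply, hu]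
    split_ifs with h
    · rw [Finset.sum_eq_single ⟨_, h⟩]
      all_goals simp +contextual [Subtype.ext_iff]
    · have hne (u : U) : (u : G) ≠ x * g * x⁻¹ := fun hux ↦ h (hux ▸ u.2)
      simp [hne]
  rw [Representation.character, coind_eq, LinearMap.trace_restrict_eq_of_forall_mem _ _ hf,
    trace_eq_sum_trace_proj_comp_single]
  simp only [block, map_smul, smul_eq_mul, ← Finset.mul_sum, finsum_eq_sum_of_fintype]
  rw [← Equiv.sum_comp (Equiv.inv G)]
  congr! 2 with x
  simp only [apply_dite (LinearMap.trace k V), map_zero, Equiv.inv_apply, inv_inv,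
    Representation.character]

end Coind

section Reciprocity

open Representation

variable {k G V W : Type*} [Field k] [Group G] {U : Subgroup G} [AddCommGroup V] [Module k V]
  [AddCommGroup W] [Module k W] {ρ : Representation k G V} {β : Representation k U W}

/-- The `G`-equivariant map into the coinduced representation that Frobenius reciprocity attaches
to a `U`-equivariant map. -/
def coindLift (S : IntertwiningMap (ρ.comp U.subtype) β) :
    IntertwiningMap ρ (coind U.subtype β) where
  toLinearMap := (LinearMap.pi fun x ↦ S.toLinearMap ∘ₗ ρ x).codRestrict _ fun v u x ↦ by
    simpa using S.isIntertwining _ _ u (ρ x v)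
  isIntertwining' g := by
    ext v x
    change S (ρ x (ρ g v)) = S (ρ (x * g) v)
    rw [map_mul, Module.End.mul_apply]

theorem coindLift_apply (S : IntertwiningMap (ρ.comp U.subtype) β) (v : V) (x : G) :
    (coindLift S v : G → W) x = S (ρ x v) :=
  rfl

variable [FiniteDimensional k V] [FiniteDimensional k W]

theorem exists_intertwiningMap_coind_ne_zero [Fintype U] (hU : (Nat.card U : k) ≠ 0)
    (h : ∑ u : U, ρ.character u * β.character u⁻¹ ≠ 0) :
    ∃ T : IntertwiningMap ρ (coind U.subtype β), T ≠ 0 := by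
  have := invertibleOfNonzero hU
  have hom_restrict_ne_zero : Module.finrank k (IntertwiningMap (ρ.comp U.subtype) β) ≠ 0 := by
    have hdim := card_inv_mul_sum_char_mul_char_eq_finrank (ρ.comp U.subtype) β
    rw [← Equiv.sum_comp (Equiv.inv U)] at hdim
    intro h0
    rw [h0, Nat.cast_zero] at hdim
    refine mul_ne_zero (inv_ne_zero hU) h (Eq.trans ?_ hdim)
    simp [character, mul_comm]
  have : Nontrivial (IntertwiningMap (ρ.comp U.subtype) β) :=
    Module.nontrivial_of_finrank_pos (R := k) (Nat.pos_of_ne_zero hom_restrict_ne_zero)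
  obtain ⟨S, hS⟩ := exists_ne (0 : IntertwiningMap (ρ.comp U.subtype) β)
  refine ⟨coindLift S, fun hT ↦ hS (IntertwiningMap.ext (LinearMap.ext fun v ↦ ?_))⟩
  have := congrFun (congrArg Subtype.val (DFunLike.congr_fun hT v)) 1
  simpa [coindLift_apply] using this

theorem character_eq_character_coind [Finite G] [Fintype U] [ρ.IsIrreducible]
    (hU : (Nat.card U : k) ≠ 0)
    (hdim : Module.finrank k V = Module.finrank k (coindV U.subtype β))
    (h : ∑ u : U, ρ.character u * β.character u⁻¹ ≠ 0) :
    ρ.character = (coind U.subtype β).character := by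
  obtain ⟨T, hT⟩ := exists_intertwiningMap_coind_ne_zero hU h
  have injective : Function.Injective T :=
    (IsIrreducible.injective_or_eq_zero T).resolve_right hT
  have bijective : Function.Bijective T :=
    ⟨injective, (T.toLinearMap.injective_iff_surjective_of_finrank_eq_finrank hdim).1 injective⟩
  exact char_iso (T.ofBijective bijective)

end Reciprocity

section Unitary

open scoped ComplexOrder

variable {G n 𝕜 : Type*} [Group G] [Finite G] [Fintype n] [DecidableEq n] [RCLike 𝕜]

theorem exists_posDef_conjTranspose_mul_mul_eq (A : G →* Matrix n n 𝕜) :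
    ∃ H : Matrix n n 𝕜, H.PosDef ∧ ∀ g, (A g)ᴴ * H * A g = H := by
  classical
  have := Fintype.ofFinite G
  refine ⟨∑ g, (A g)ᴴ * A g, ?_, fun g ↦ ?_⟩
  · rw [← Finset.add_sum_erase _ _ (Finset.mem_univ (1 : G)), map_one, conjTranspose_one, one_mul]
    exact Matrix.PosDef.one.add_posSemidef <|
      Matrix.posSemidef_sum _ fun g _ ↦ Matrix.posSemidef_conjTranspose_mul_self (A g)
  · rw [Finset.mul_sum, Finset.sum_mul, ← Equiv.sum_comp (Equiv.mulRight g) fun x ↦ (A x)ᴴ * A x]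
    simp [Matrix.mul_assoc]

theorem trace_map_inv (A : G →* Matrix n n 𝕜) (g : G) : (A g⁻¹).trace = star (A g).trace := by
  obtain ⟨H, hH, hA⟩ := exists_posDef_conjTranspose_mul_mul_eq A
  have hdet : IsUnit H.det := (Matrix.isUnit_iff_isUnit_det H).1 hH.isUnit
  have conj_mul : (A g)ᴴ * H = H * A g⁻¹ := by
    rw [← hA g, Matrix.mul_assoc _ (A g), ← map_mul, mul_inv_cancel, map_one, mul_one, hA]
  rw [← Matrix.trace_conjTranspose, ← Matrix.mul_nonsing_inv_cancel_right H (A g)ᴴ hdet, conj_mul,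
    Matrix.trace_mul_comm, Matrix.nonsing_inv_mul_cancel_left H _ hdet]

end Unitary

section IrrChar

variable {G : Type} [Group G] {χ : G → ℂ}

theorem IsIrrChar.exists_representation (hχ : IsIrrChar χ) :
    ∃ (n : ℕ) (ρ : Representation ℂ G (Fin n → ℂ)), ρ.IsIrreducible ∧ ρ.character = χ := by
  obtain ⟨n, ρ, ⟨hn, hρ⟩, rfl⟩ := hχ
  have : NeZero n := ⟨hn.ne'⟩
  let e : Matrix (Fin n) (Fin n) ℂ ≃ₐ[ℂ] Module.End ℂ (Fin n → ℂ) := Matrix.toLinAlgEquiv'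
  let ρ' : Representation ℂ G (Fin n → ℂ) := (e : _ →* _).comp ((Units.coeHom _).comp ρ)
  have : Nontrivial (Subrepresentation ρ') :=
    ⟨⊥, ⊤, fun h ↦ bot_ne_top (congrArg Subrepresentation.toSubmodule h)⟩
  refine ⟨n, ρ', ⟨fun W ↦ ?_⟩, ?_⟩
  · exact (hρ _ W.apply_mem_toSubmodule).imp Subrepresentation.ext Subrepresentation.ext
  · ext g
    exact Matrix.trace_toLin'_eq _

theorem IsIrrChar.map_inv [Finite G] (hχ : IsIrrChar χ) (g : G) :
    χ g⁻¹ = (starRingEnd ℂ) (χ g) := by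
  obtain ⟨n, ρ, -, rfl⟩ := hχ
  exact trace_map_inv ((Units.coeHom _).comp ρ) g

theorem IsIrrChar.apply_one_eq_natCast (hχ : IsIrrChar χ) : ∃ n : ℕ, χ 1 = n := by
  obtain ⟨n, ρ, -, rfl⟩ := hχ
  exact ⟨n, by simp [charOf]⟩

theorem IsIrrChar.map (hχ : IsIrrChar χ) (σ : ℂ ≃+* ℂ) : IsIrrChar (σ ∘ χ) := by
  obtain ⟨n, ρ, ⟨hn, hρ⟩, rfl⟩ := hχ
  let e : (Fin n → ℂ) →ₛₗ[(σ : ℂ →+* ℂ)] (Fin n → ℂ) :=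
    ⟨⟨(σ ∘ ·), fun v w ↦ funext fun i ↦ map_add σ _ _⟩, fun c v ↦ funext fun i ↦ map_mul σ _ _⟩
  have e_surjective : Function.Surjective e := σ.surjective.comp_left
  refine ⟨n, (Matrix.GeneralLinearGroup.map (σ : ℂ →+* ℂ)).comp ρ, ⟨hn, fun W hW ↦ ?_⟩, ?_⟩
  · have stable (g : G) (v : Fin n → ℂ) (hv : v ∈ W.comap e) : (ρ g).1 *ᵥ v ∈ W.comap e := by
      have commutes : (ρ g).1.map σ *ᵥ e v = e ((ρ g).1 *ᵥ v) :=
        funext fun i ↦ (RingHom.map_mulVec (σ : ℂ →+* ℂ) _ v i).symm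
      exact Submodule.mem_comap.2 (commutes ▸ hW g (e v) hv)
    rw [← Submodule.map_comap_eq_of_surjective e_surjective W]
    rcases hρ (W.comap e) stable with h | h
    · exact .inl (by rw [h, Submodule.map_bot])
    · exact .inr (by rw [h, Submodule.map_top, LinearMap.range_eq_top.2 e_surjective])
  · ext g
    exact AddMonoidHom.map_trace (σ : ℂ →+* ℂ).toAddMonoidHom (ρ g).1

theorem IsIrrChar.isIntegral [Finite G] (hχ : IsIrrChar χ) (g : G) : IsIntegral ℤ (χ g) := by
  obtain ⟨n, ρ, -, rfl⟩ := hχ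
  refine isIntegral_trace (.of_pow (Nat.card_pos (α := G)) ?_)
  rw [← Units.val_pow_eq_pow_val, ← map_pow, pow_card_eq_one', map_one]
  exact isIntegral_one

theorem IsIrrChar.cInner_eq_sum [Fintype G] (hχ : IsIrrChar χ) (α : G → ℂ) :
    cInner α χ = (Nat.card G : ℂ)⁻¹ * ∑ g, α g * χ g⁻¹ := by
  simp only [cInner, finsum_eq_sum_of_fintype, hχ.map_inv]

theorem IsIrrChar.cInner_map [Finite G] (hχ : IsIrrChar χ) (α : G → ℂ) (σ : ℂ ≃+* ℂ) :
    cInner (σ ∘ α) (σ ∘ χ) = σ (cInner α χ) := by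
  have := Fintype.ofFinite G
  simp [hχ.cInner_eq_sum, (hχ.map σ).cInner_eq_sum]

end IrrChar

section InducedChar

variable {G : Type} [Group G] [Finite G] {U : Subgroup G}

theorem inducedChar_character {V : Type*} [AddCommGroup V] [Module ℂ V] [FiniteDimensional ℂ V]
    (β : Representation ℂ U V) :
    inducedChar U β.character = (Representation.coind U.subtype β).character :=
  funext fun g ↦ (character_coind (Nat.cast_ne_zero.2 Nat.card_pos.ne') β g).symm

theorem inducedChar_one (ψ : U → ℂ) : inducedChar U ψ 1 = U.index * ψ 1 := by
  have := Fintype.ofFinite G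
  have hU : (Nat.card U : ℂ) ≠ 0 := Nat.cast_ne_zero.2 Nat.card_pos.ne'
  calc inducedChar U ψ 1 = (Nat.card U : ℂ)⁻¹ * ∑ _ : G, ψ 1 := by
        simp only [inducedChar, finsum_eq_sum_of_fintype, mul_one, inv_mul_cancel, one_mem,
          dite_true]
        rfl
    _ = U.index * ψ 1 := by
        rw [Finset.sum_const, Finset.card_univ, ← Nat.card_eq_fintype_card, ← U.card_mul_index,
          nsmul_eq_mul, Nat.cast_mul, mul_assoc, inv_mul_cancel_left₀ hU]

theorem charField_inducedChar_le (ψ : U → ℂ) : charField (inducedChar U ψ) ≤ charField ψ := by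
  have := Fintype.ofFinite G
  refine Subfield.closure_le.2 (Set.range_subset_iff.2 fun g ↦ ?_)
  rw [inducedChar, finsum_eq_sum_of_fintype]
  refine mul_mem (inv_mem (natCast_mem _ _)) (sum_mem fun x _ ↦ ?_)
  split_ifs with h
  · exact Subfield.subset_closure ⟨_, rfl⟩
  · exact zero_mem _

theorem IsIrrChar.eq_inducedChar {χ : G → ℂ} {φ : U → ℂ} (hχ : IsIrrChar χ) (hφ : IsIrrChar φ)
    (hdeg : χ 1 = inducedChar U φ 1) (h : cInner (fun u : U ↦ χ u) φ ≠ 0) :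
    χ = inducedChar U φ := by
  have := Fintype.ofFinite U
  rw [hφ.cInner_eq_sum] at h
  obtain ⟨n, ρ, _, rfl⟩ := hχ.exists_representation
  obtain ⟨m, β, _, rfl⟩ := hφ.exists_representation
  rw [inducedChar_character] at hdeg ⊢
  refine character_eq_character_coind (Nat.cast_ne_zero.2 Nat.card_pos.ne') ?_
    (right_ne_zero_of_mul h)
  simpa only [Representation.char_one, Nat.cast_inj] using hdeg

end InducedChar

section CharField

variable {U : Type} [Group U] [Finite U] {φ : U → ℂ}

theorem IsIrrChar.card_orbit_eq_finrank_charField (hφ : IsIrrChar φ) {K : Subfield ℂ}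
    (h : K ≤ charField φ) :
    letI := (Subfield.inclusion h).toAlgebra
    Nat.card (MulAction.orbit (ℂ ≃ₐ[K] ℂ) φ) = Module.finrank K (charField φ) := by
  have adjoin_eq : IntermediateField.adjoin K (Set.range φ) = Subfield.extendScalars h := by
    apply le_antisymm
    · exact IntermediateField.adjoin_le_iff.2 Subfield.subset_closure
    · change charField φ ≤ (IntermediateField.adjoin K (Set.range φ)).toSubfield
      exact Subfield.closure_le.2 (IntermediateField.subset_adjoin K _)
  rw [card_orbit_eq_finrank_adjoin fun u ↦ (hφ.isIntegral u).tower_top, adjoin_eq]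
  rfl

end CharField

section Constituents

variable {G : Type} [Group G] {U : Subgroup G} {χ : G → ℂ} {φ : U → ℂ} {d : ℂ}

/-- The irreducible constituents of degree `d` of the restriction of `χ` to `U`. -/
def constituentsOfDegree (χ : G → ℂ) (U : Subgroup G) (d : ℂ) : Set (U → ℂ) :=
  {φ | IsIrrChar φ ∧ φ 1 = d ∧ cInner (fun u : U ↦ χ u) φ ≠ 0}

theorem smul_mem_constituentsOfDegree [Finite U] (hφ : φ ∈ constituentsOfDegree χ U d)
    (σ : ℂ ≃ₐ[charField χ] ℂ) : σ • φ ∈ constituentsOfDegree χ U d := by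
  obtain ⟨hirr, hdeg, hinner⟩ := hφ
  refine ⟨hirr.map σ.toRingEquiv, ?_, ?_⟩
  · obtain ⟨n, hn⟩ := hirr.apply_one_eq_natCast
    rw [← hdeg, Pi.smul_apply, hn]
    exact map_natCast σ n
  · have fixes_restrict : σ ∘ (fun u : U ↦ χ u) = fun u : U ↦ χ u :=
      funext fun u ↦ σ.commutes ⟨χ u, Subfield.subset_closure ⟨u, rfl⟩⟩
    have hmap : cInner (fun u : U ↦ χ u) (σ • φ) = σ (cInner (fun u : U ↦ χ u) φ) := by
      conv_lhs => rw [← fixes_restrict]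
      exact hirr.cInner_map _ σ.toRingEquiv
    rw [hmap]
    exact (map_ne_zero σ).2 hinner

end Constituents

theorem stmt19_general (G : Type) [Group G] [Finite G] (U : Subgroup G) (ψ : ↥U → ℂ)
    (χ : G → ℂ) (hχdef : χ = inducedChar U ψ) (hχ : IsIrrChar χ) (d : ℕ) :
    charField χ ≤ charField ψ ∧
    ∀ Ψ : Set (↥U → ℂ),
      Ψ = {φ | IsIrrChar φ ∧ φ 1 = ψ 1 ∧
        cInner (fun u : ↥U => χ (u : G)) φ ≠ 0} →
      ¬ d ∣ Ψ.ncard →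
      ∃ φ ∈ Ψ, ∃ h : charField χ ≤ charField φ,
        letI := (Subfield.inclusion h).toAlgebra
        ¬ d ∣ Module.finrank ↥(charField χ) ↥(charField φ) := by
  refine ⟨hχdef ▸ charField_inducedChar_le ψ, ?_⟩
  rintro _ rfl hd
  obtain ⟨φ, hφ, horbit⟩ := exists_not_dvd_card_orbit (Γ := ℂ ≃ₐ[charField χ] ℂ)
    (fun σ φ hφ ↦ smul_mem_constituentsOfDegree hφ σ) hd
  have degree_eq : χ 1 = inducedChar U φ 1 := by
    rw [inducedChar_one, hφ.2.1, ← inducedChar_one, hχdef]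
  have hχφ : χ = inducedChar U φ := hχ.eq_inducedChar hφ.1 degree_eq hφ.2.2
  have hle : charField χ ≤ charField φ := hχφ ▸ charField_inducedChar_le φ
  exact ⟨φ, hφ, hle, hφ.1.card_orbit_eq_finrank_charField hle ▸ horbit⟩

theorem stmt19 (G : Type) [Group G] [Finite G] (U : Subgroup G)
    (ψ : ↥U → ℂ) (hψ : IsIrrChar ψ)
    (χ : G → ℂ) (hχdef : χ = inducedChar U ψ) (hχ : IsIrrChar χ) :
    charField χ ≤ charField ψ ∧
    ∀ Ψ : Set (↥U → ℂ),
      Ψ = {φ | IsIrrChar φ ∧ φ 1 = ψ 1 ∧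
        cInner (fun u : ↥U => χ (u : G)) φ ≠ 0} →
      Odd Ψ.ncard →
      ∃ φ ∈ Ψ, ∃ h : charField χ ≤ charField φ,
        letI := (Subfield.inclusion h).toAlgebra
        Odd (Module.finrank ↥(charField χ) ↥(charField φ)) := by
  simpa only [← Nat.not_even_iff_odd, even_iff_two_dvd] using
    stmt19_general G U ψ χ hχdef hχ 2

end Paper
end
end
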